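/- Let Λ be a cyclic non-self-injective Nakayama algebra on N vertices defined by a single monomial relation α_{k_2}···α_{k_1} = 0, and let D be the unique indecomposable uniserial module of length N with top S_{k_2+1} and socle S_{k_2}. If D is projective, then the global dimension of Λ is 2; otherwise D has infinite projective dimension and φdim Λ = 2. -/

import Mathlib

/-!
All modules are handled through their top `S i` and composition length `l`, which determine an
indecomposable module up to isomorphism and characterize it as the quotient of `P i` of length
`l ≤ c i` (`Typ`). Its syzygy has top `S (i + l)` and length `c i - l`, and it is projective iff
`l = c i`.

With a single relation, starting at `a = k₁` and ending at `b + 1 = k₂ + 1`, the Kupisch series is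
`c (a - k) = c a + k` for `0 ≤ k < N`. Hence `v + c v ≡ b + 1` modulo `N` for every vertex `v`. So a
syzygy of length `q` has top `S (b + 1 - q)`, and a second syzygy has length divisible by `N` and
top `S (b + 1)` (`Typ.syzygy_two`). On the modules with top `S (b + 1)` and length `s` divisible by
`N` the syzygy acts by `s ↦ T - s`, where `T = c (b + 1)` is a multiple of `N`; such a module is
projective iff `s = T`. The module `D` is the one with `s = N`.

If `D` is projective, then `T = N` and all second syzygies are projective or zero, while a simple
module in the socle of a projective is a nonprojective first syzygy. If `D` is not projective, its
syzygies alternate between the lengths `N` and `T - N` and are never projective. In that case `L`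
is injective on the classes of second syzygies, so that `φ ≤ 2` (`syzygyRank_stable`). Conversely,
`c a > N ≥ 3`, and some `q ∈ {1, 2}` has `c (b - q) = c (b + 1 - q) + 1`; then the syzygies of
lengths `q` and `q + 1` of two quotients of `P a` are nonprojective and have isomorphic syzygies, so
the direct sum of these quotients has `φ ≥ 2` (`two_le_phi`).

Ranks of subgroups of `K₀` are computed from the linear independence of the classes of
non-isomorphic nonprojective uniserial modules (`linearIndependent_classOf`). It is proved with
the additive invariants `mult X`, which play the role of the Krull–Schmidt multiplicities.
-/

/-!
Common definitions: Igusa–Todorov φ-function, syzygies, and cyclic Nakayama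
algebras presented by monomial relations, following E. Sen,
"The φ-dimension of cyclic Nakayama algebras".
-/

noncomputable section

namespace PhiDim

variable (Λ : Type) [Ring Λ]

/-- A module is *uniserial* if its submodules are totally ordered by inclusion. -/
def IsUniserial (M : ModuleCat.{0} Λ) : Prop :=
  ∀ N₁ N₂ : Submodule Λ M, N₁ ≤ N₂ ∨ N₂ ≤ N₁

/-- A module is *indecomposable* if it is nonzero and admits no nontrivial
direct sum decomposition. -/
def Indec (M : ModuleCat.{0} Λ) : Prop :=
  Nontrivial M ∧ ∀ N N' : Submodule Λ M, IsCompl N N' → N = ⊥ ∨ N' = ⊥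

/-- `X` is (isomorphic to) a direct summand of `M`. -/
def IsSummand (X M : ModuleCat.{0} Λ) : Prop :=
  ∃ N N' : Submodule Λ M, IsCompl N N' ∧ Nonempty (X ≃ₗ[Λ] N)

/-- `f : P → M` is a projective cover: `P` is projective, `f` is surjective and
its kernel is superfluous in `P`. -/
def IsProjCover {P M : ModuleCat.{0} Λ} (f : P →ₗ[Λ] M) : Prop :=
  Module.Projective Λ P ∧ Function.Surjective f ∧
    ∀ N : Submodule Λ P, N ⊔ LinearMap.ker f = ⊤ → N = ⊤

/-- `Y` is (isomorphic to) the first syzygy `Ω M`, i.e. the kernel of a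
projective cover of `M`. -/
def IsSyzygy (Y M : ModuleCat.{0} Λ) : Prop :=
  ∃ (P : ModuleCat.{0} Λ) (f : P →ₗ[Λ] M), IsProjCover Λ f ∧
    Nonempty (Y ≃ₗ[Λ] LinearMap.ker f)

/-- `Y` is (isomorphic to) the `n`-th syzygy `Ω^n M`. -/
def IsNthSyzygy : ℕ → ModuleCat.{0} Λ → ModuleCat.{0} Λ → Prop
  | 0, Y, M => Nonempty (Y ≃ₗ[Λ] M)
  | n + 1, Y, M => ∃ Z : ModuleCat.{0} Λ, IsSyzygy Λ Z M ∧ IsNthSyzygy n Y Z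

/-- `M` is `Ω`-periodic: `Ω^k M ≅ M` for some `k ≥ 1`. -/
def IsPeriodic (M : ModuleCat.{0} Λ) : Prop :=
  ∃ k : ℕ, 1 ≤ k ∧ IsNthSyzygy Λ k M M

/-- Projective dimension at most `n` (via minimal projective resolutions:
the `n`-th syzygy is projective). -/
def PdimLE (M : ModuleCat.{0} Λ) (n : ℕ) : Prop :=
  ∃ Y : ModuleCat.{0} Λ, IsNthSyzygy Λ n Y M ∧ Module.Projective Λ Y

/-- `M` has infinite projective dimension. -/
def HasInfinitePdim (M : ModuleCat.{0} Λ) : Prop :=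
  ¬ ∃ n : ℕ, PdimLE Λ M n

/-- The (left) global dimension is at most `n`: every finitely generated module
has projective dimension at most `n`. -/
def GlobalDimLE (n : ℕ) : Prop :=
  ∀ M : ModuleCat.{0} Λ, Module.Finite Λ M → PdimLE Λ M n

/-- `Λ` has infinite global dimension. -/
def HasInfiniteGlobalDim : Prop := ¬ ∃ n : ℕ, GlobalDimLE Λ n

/-- `M` has composition length `n`. -/
def HasLength (M : ModuleCat.{0} Λ) (n : ℕ) : Prop :=
  ∃ s : CompositionSeries (Submodule Λ M), s.head = ⊥ ∧ s.last = ⊤ ∧ s.length = n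

/-- The socle of a uniserial module: the smallest nonzero submodule. -/
def socle (M : Type) [AddCommGroup M] [Module Λ M] : Submodule Λ M :=
  sInf {N : Submodule Λ M | N ≠ ⊥}

/-- The radical of a uniserial (local) module: the largest proper submodule. -/
def radical (M : Type) [AddCommGroup M] [Module Λ M] : Submodule Λ M :=
  sSup {N : Submodule Λ M | N ≠ ⊤}

/-- `soc M ≅ T`. -/
def SocIso (M T : ModuleCat.{0} Λ) : Prop :=
  Nonempty (socle Λ M ≃ₗ[Λ] T)

/-- `top M = M / rad M ≅ T`. -/
def TopIso (M T : ModuleCat.{0} Λ) : Prop :=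
  Nonempty ((M ⧸ radical Λ M) ≃ₗ[Λ] T)

/-- `T` is a composition factor (a simple subquotient) of `M`. -/
def IsCompFactorOf (T M : ModuleCat.{0} Λ) : Prop :=
  ∃ (N₁ : Submodule Λ M) (N₀ : Submodule Λ N₁),
    Nonempty ((N₁ ⧸ N₀) ≃ₗ[Λ] T)

/-- The number of composition factors of a composition series `s` of `M`
isomorphic to `T`. -/
def factorCount (M : ModuleCat.{0} Λ) (s : CompositionSeries (Submodule Λ M))
    (T : ModuleCat.{0} Λ) : ℕ :=
  Nat.card {i : Fin s.length //
    Nonempty ((s i.succ ⧸ Submodule.comap (s i.succ).subtype (s i.castSucc)) ≃ₗ[Λ] T)}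

/-! ### The Igusa–Todorov function φ -/

/-- Finitely generated modules. -/
def FGMod := {M : ModuleCat.{0} Λ // Module.Finite Λ M}

/-- Generators of the relations defining `K₀`: `[C] - [A] - [B]` for `C ≅ A ⊕ B`,
and `[P]` for `P` projective. -/
def K0RelSet : Set (FreeAbelianGroup (FGMod Λ)) :=
  {x | ∃ A B C : FGMod Λ, Nonempty ((C.1 : Type) ≃ₗ[Λ] ((A.1 : Type) × (B.1 : Type))) ∧
        x = FreeAbelianGroup.of C - FreeAbelianGroup.of A - FreeAbelianGroup.of B} ∪
  {x | ∃ P : FGMod Λ, Module.Projective Λ P.1 ∧ x = FreeAbelianGroup.of P}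

def K0Rel : AddSubgroup (FreeAbelianGroup (FGMod Λ)) :=
  AddSubgroup.closure (K0RelSet Λ)

/-- `K₀`: the free abelian group on finitely generated modules, modulo
`[A ⊕ B] = [A] + [B]` and `[P] = 0` for projective `P`. -/
def K0 := FreeAbelianGroup (FGMod Λ) ⧸ K0Rel Λ

instance : AddCommGroup (K0 Λ) := QuotientAddGroup.Quotient.addCommGroup _

/-- The class `[M]` of a finitely generated module in `K₀`. -/
def classOf (M : FGMod Λ) : K0 Λ := QuotientAddGroup.mk (FreeAbelianGroup.of M)

/-- Generators of the subgroup `L^t ⟨add M⟩` of `K₀`: classes of `t`-th syzygies of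
the indecomposable direct summands of `M`. -/
def addGens (M : ModuleCat.{0} Λ) (t : ℕ) : Set (K0 Λ) :=
  {k | ∃ X : ModuleCat.{0} Λ, Indec Λ X ∧ IsSummand Λ X M ∧
        ∃ Y : FGMod Λ, IsNthSyzygy Λ t Y.1 X ∧ k = classOf Λ Y}

/-- The rank of `L^t ⟨add M⟩`. -/
def syzygyRank (M : ModuleCat.{0} Λ) (t : ℕ) : Cardinal :=
  Module.rank ℤ (AddSubgroup.closure (addGens Λ M t))

/-- The Igusa–Todorov function
`φ(M) = min { t | rank L^t ⟨add M⟩ = rank L^{t+j} ⟨add M⟩ for all j ≥ 1 }`. -/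
def phi (M : ModuleCat.{0} Λ) : ℕ :=
  sInf {t : ℕ | ∀ j : ℕ, 1 ≤ j → syzygyRank Λ M (t + j) = syzygyRank Λ M t}

/-- `φdim Λ = sup { φ(M) | M a finitely generated Λ-module }`. -/
def phiDim : ℕ∞ := ⨆ M : FGMod Λ, (phi Λ M.1 : ℕ∞)

/-- Isomorphism of modules as a setoid on `ModuleCat Λ`. -/
def isoSetoid : Setoid (ModuleCat.{0} Λ) where
  r M N := Nonempty (M ≃ₗ[Λ] N)
  iseqv := ⟨fun M => ⟨LinearEquiv.refl Λ M⟩, fun ⟨e⟩ => ⟨e.symm⟩, fun ⟨e⟩ ⟨f⟩ => ⟨e.trans f⟩⟩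

/-- `α(X)`: the number of pairwise non-isomorphic, non-projective, indecomposable
direct summands of `X`. -/
def alpha (X : ModuleCat.{0} Λ) : ℕ :=
  Nat.card {c : Quotient (isoSetoid Λ) // ∃ Y : ModuleCat.{0} Λ,
    Quotient.mk (isoSetoid Λ) Y = c ∧ Indec Λ Y ∧ ¬ Module.Projective Λ Y ∧ IsSummand Λ Y X}

/-! ### Cyclic Nakayama algebras presented by monomial relations -/

/-- A cyclic Nakayama artin algebra `Λ` on `N ≥ 3` vertices, presented by an
irredundant system of `r` monomial relations `α_{k_{2j}} ⋯ α_{k_{2j-1}} = 0`.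

* `S i` (for `i : ZMod N`) are the simple modules attached to the vertices of the
  cyclic quiver, `P i` a projective cover of `S i`, and `c i` the composition length
  of `P i` (the Kupisch series).
* `layer` expresses that the arrows of the quiver are exactly `α_i : i → i+1`:
  the radical of an indecomposable module with top `S i`, when nonzero, has top `S (i+1)`.
* `kOdd j = k_{2j-1}` and `kEven j = k_{2j}` record the start and end indices of the
  `j`-th relation; irredundancy and completeness of the system of relations is recorded
  by `relation_starts` (the chain of inclusions `P_v ↪ P_{v-1}` breaks exactly at the
  starting vertices of the relations); `relation_ends` says that the `j`-th relation
  is a path from `k_{2j-1}` to `k_{2j} + 1` consisting of `c (k_{2j-1})` arrows. -/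
structure CyclicNakayama (R : Type) (Λ : Type) [CommRing R] [Ring Λ] [Algebra R Λ] where
  artinianBase : IsArtinianRing R
  finiteAlgebra : Module.Finite R Λ
  N : ℕ
  three_le_N : 3 ≤ N
  r : ℕ
  one_le_r : 1 ≤ r
  S : ZMod N → ModuleCat.{0} Λ
  S_simple : ∀ i, IsSimpleModule Λ (S i)
  S_complete : ∀ T : ModuleCat.{0} Λ, IsSimpleModule Λ T → ∃ i, Nonempty (T ≃ₗ[Λ] S i)
  S_distinct : ∀ i j, Nonempty (S i ≃ₗ[Λ] S j) → i = j
  nakayama : ∀ M : ModuleCat.{0} Λ, Module.Finite Λ M → Indec Λ M → IsUniserial Λ M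
  P : ZMod N → ModuleCat.{0} Λ
  P_finite : ∀ i, Module.Finite Λ (P i)
  P_projective : ∀ i, Module.Projective Λ (P i)
  P_cover : ∀ i, ∃ f : P i →ₗ[Λ] S i, IsProjCover Λ f
  c : ZMod N → ℕ
  P_length : ∀ i, HasLength Λ (P i) (c i)
  two_le_c : ∀ i, 2 ≤ c i
  layer : ∀ M : ModuleCat.{0} Λ, Module.Finite Λ M → Indec Λ M → ∀ i : ZMod N,
    TopIso Λ M (S i) → radical Λ M ≠ ⊥ →
      TopIso Λ (ModuleCat.of Λ (radical Λ M)) (S (i + 1))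
  kOdd : ZMod r → ZMod N
  kEven : ZMod r → ZMod N
  kOdd_mono : ∀ j j' : ZMod r, j.val < j'.val → (kOdd j).val < (kOdd j').val
  relation_starts : ∀ v : ZMod N, (∃ j, kOdd j = v) ↔ c v ≠ c (v + 1) + 1
  relation_ends : ∀ j, kEven j + 1 = kOdd j + (c (kOdd j) : ZMod N)
  soc_min : ∀ j, SocIso Λ (P (kOdd j)) (S (kEven j))
  soc_classes : ∀ v : ZMod N, ∃ j, SocIso Λ (P v) (S (kEven j))

variable {R : Type} [CommRing R]
variable {Λ} [Algebra R Λ]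

/-- `D` is (a representative of) the module `Δ_j`: a shortest indecomposable module
with top `S_{k_{2(j-1)} + 1}` and socle `S_{k_{2j}}`. -/
def IsDelta (pres : CyclicNakayama R Λ) (j : ZMod pres.r) (D : ModuleCat.{0} Λ) : Prop :=
  Module.Finite Λ D ∧ Indec Λ D ∧
    TopIso Λ D (pres.S (pres.kEven (j - 1) + 1)) ∧ SocIso Λ D (pres.S (pres.kEven j)) ∧
    ∀ D' : ModuleCat.{0} Λ, Module.Finite Λ D' → Indec Λ D' →
      TopIso Λ D' (pres.S (pres.kEven (j - 1) + 1)) → SocIso Λ D' (pres.S (pres.kEven j)) →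
      ∀ n n' : ℕ, HasLength Λ D n → HasLength Λ D' n' → n ≤ n'

/-- `M` is a `Δ`-module: it admits a finite filtration whose successive subquotients
are isomorphic to modules among `Δ_1, …, Δ_r`. -/
def IsDeltaModule (pres : CyclicNakayama R Λ) (Δ : ZMod pres.r → ModuleCat.{0} Λ)
    (M : ModuleCat.{0} Λ) : Prop :=
  ∃ (n : ℕ) (F : Fin (n + 1) → Submodule Λ M), Monotone F ∧ F 0 = ⊥ ∧ F (Fin.last n) = ⊤ ∧
    ∀ i : Fin n, ∃ j : ZMod pres.r,
      Nonempty ((F i.succ ⧸ Submodule.comap (F i.succ).subtype (F i.castSucc)) ≃ₗ[Λ] Δ j)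

end PhiDim

namespace PhiDim

section General

variable {Λ : Type} [Ring Λ]

/-! ### Composition length -/

/-- The composition length of a module as a natural number, with value `0` when the length is
infinite; over an artinian ring every finitely generated module has finite length. -/
def ln (Λ : Type) [Ring Λ] (M : Type) [AddCommGroup M] [Module Λ M] : ℕ :=
  (Module.length Λ M).toNat

section Length

variable {M N : Type} [AddCommGroup M] [Module Λ M] [AddCommGroup N] [Module Λ N]

lemma ln_equiv (e : M ≃ₗ[Λ] N) : ln Λ M = ln Λ N := by
  unfold ln; rw [e.length_eq]

lemma ln_of_hasLength {X : ModuleCat.{0} Λ} {n : ℕ} (h : HasLength Λ X n) : ln Λ X = n := by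
  obtain ⟨s, h₁, h₂, rfl⟩ := h
  unfold ln
  rw [← Module.length_compositionSeries s h₁ h₂]
  simp

variable [IsArtinianRing Λ] [Module.Finite Λ M]

lemma coe_ln : (ln Λ M : ℕ∞) = Module.length Λ M :=
  ENat.natCast_toNat Module.length_ne_top

lemma ln_add (K : Submodule Λ M) : ln Λ K + ln Λ (M ⧸ K) = ln Λ M := by
  have h := Module.length_eq_add_of_exact K.subtype K.mkQ K.subtype_injective K.mkQ_surjective
    (LinearMap.exact_subtype_mkQ K)
  rw [← coe_ln, ← coe_ln, ← coe_ln] at h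
  exact_mod_cast h.symm

lemma ln_prod [Module.Finite Λ N] : ln Λ (M × N) = ln Λ M + ln Λ N := by
  have h := Module.length_prod Λ M N
  rw [← coe_ln, ← coe_ln, ← coe_ln] at h
  exact_mod_cast h

lemma ln_eq_zero : ln Λ M = 0 ↔ Subsingleton M := by
  rw [← Module.length_eq_zero_iff (R := Λ), ← coe_ln]
  norm_cast

lemma ln_pos [Nontrivial M] : 0 < ln Λ M := by
  rcases Nat.eq_zero_or_pos (ln Λ M) with h | h
  · exact absurd (ln_eq_zero.1 h) (not_subsingleton M)
  · exact h

lemma ln_lt {K : Submodule Λ M} (h : K ≠ ⊤) : ln Λ K < ln Λ M := by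
  have := Submodule.length_lt h
  rw [← coe_ln, ← coe_ln] at this
  exact_mod_cast this

lemma ln_simple [IsSimpleModule Λ M] : ln Λ M = 1 := by
  have := Module.length_eq_one Λ M
  rw [← coe_ln] at this
  exact_mod_cast this

lemma ln_surj (f : M →ₗ[Λ] N) (hf : Function.Surjective f) :
    ln Λ (LinearMap.ker f) + ln Λ N = ln Λ M := by
  rw [← ln_add (LinearMap.ker f), ln_equiv (f.quotKerEquivOfSurjective hf)]

lemma ln_lt_of_lt {K L : Submodule Λ M} (h : K < L) : ln Λ K < ln Λ L := by
  rw [ln_equiv (Submodule.comapSubtypeEquivOfLe h.le).symm]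
  refine ln_lt fun h' => ?_
  rw [Submodule.comap_subtype_eq_top] at h'
  exact absurd h' (not_le_of_gt h)

/-- Surjections between modules of the same finite length are bijective. -/
lemma bijective_of_surj_of_ln (f : M →ₗ[Λ] N) (hf : Function.Surjective f)
    (h : ln Λ M = ln Λ N) : Function.Bijective f := by
  refine ⟨?_, hf⟩
  have := ln_surj f hf
  have h0 : ln Λ (LinearMap.ker f) = 0 := by omega
  rw [ln_eq_zero, Submodule.subsingleton_iff_eq_bot] at h0
  exact LinearMap.ker_eq_bot.1 h0

end Length

/-! ### Uniserial modules -/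

lemma IsUniserial.of_inj {X Y : ModuleCat.{0} Λ} (hY : IsUniserial Λ Y) (f : X →ₗ[Λ] Y)
    (hf : Function.Injective f) : IsUniserial Λ X := by
  intro A B
  rcases hY (A.map f) (B.map f) with h | h
  · exact Or.inl ((Submodule.map_le_map_iff_of_injective hf _ _).1 h)
  · exact Or.inr ((Submodule.map_le_map_iff_of_injective hf _ _).1 h)

lemma IsUniserial.of_surj {X Y : ModuleCat.{0} Λ} (hX : IsUniserial Λ X) (f : X →ₗ[Λ] Y)
    (hf : Function.Surjective f) : IsUniserial Λ Y := by
  intro A B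
  rcases hX (A.comap f) (B.comap f) with h | h
  · exact Or.inl ((Submodule.comap_le_comap_iff_of_surjective hf).1 h)
  · exact Or.inr ((Submodule.comap_le_comap_iff_of_surjective hf).1 h)

lemma IsUniserial.indec {X : ModuleCat.{0} Λ} (hX : IsUniserial Λ X) (h : Nontrivial X) :
    Indec Λ X := by
  refine ⟨h, fun A B hAB => ?_⟩
  rcases hX A B with h | h
  · exact Or.inl (le_bot_iff.1 (hAB.disjoint.le_bot.trans' (le_inf le_rfl h)))
  · exact Or.inr (le_bot_iff.1 (hAB.disjoint.le_bot.trans' (le_inf h le_rfl)))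

/-- Proper submodules of a uniserial module are superfluous. -/
lemma IsUniserial.superfluous {X : ModuleCat.{0} Λ} (hX : IsUniserial Λ X) {K : Submodule Λ X}
    (hK : K ≠ ⊤) (A : Submodule Λ X) (h : A ⊔ K = ⊤) : A = ⊤ := by
  rcases hX A K with h' | h'
  · exact absurd (by rwa [sup_eq_right.2 h'] at h) hK
  · rwa [sup_eq_left.2 h'] at h

lemma IsUniserial.radical_eq {X : ModuleCat.{0} Λ} (hX : IsUniserial Λ X) {K : Submodule Λ X}
    (hK : IsCoatom K) : radical Λ X = K := by
  refine le_antisymm (sSup_le fun A hA => ?_) (le_sSup hK.1)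
  rcases hX A K with h | h
  · exact h
  · exact ((hK.le_iff_eq hA).1 h).le

lemma IsUniserial.isCoatom_radical {X : ModuleCat.{0} Λ} (hX : IsUniserial Λ X)
    [Module.Finite Λ X] [Nontrivial X] : IsCoatom (radical Λ X) := by
  obtain ⟨K, hK, -⟩ := (eq_top_or_exists_le_coatom (⊥ : Submodule Λ X)).resolve_left bot_ne_top
  rwa [hX.radical_eq hK]

lemma le_radical {X : ModuleCat.{0} Λ} {K : Submodule Λ X} (hK : K ≠ ⊤) : K ≤ radical Λ X :=
  le_sSup hK

/-- The top of a uniserial module is its only simple quotient. -/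
lemma topIso_iff {X T : ModuleCat.{0} Λ} (hX : IsUniserial Λ X) [Module.Finite Λ X]
    [Nontrivial X] [IsSimpleModule Λ T] :
    TopIso Λ X T ↔ ∃ f : X →ₗ[Λ] T, Function.Surjective f := by
  constructor
  · rintro ⟨e⟩
    exact ⟨e.toLinearMap ∘ₗ (radical Λ X).mkQ,
      e.surjective.comp (Submodule.mkQ_surjective _)⟩
  · rintro ⟨f, hf⟩
    have h := hX.radical_eq (LinearMap.isCoatom_ker_of_surjective hf)
    exact ⟨(Submodule.quotEquivOfEq _ _ h).trans (f.quotKerEquivOfSurjective hf)⟩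

lemma IsUniserial.eq_of_ln [IsArtinianRing Λ] {X : ModuleCat.{0} Λ} (hX : IsUniserial Λ X)
    [Module.Finite Λ X] {A B : Submodule Λ X} (h : ln Λ A = ln Λ B) : A = B := by
  rcases hX A B with h' | h'
  · rcases h'.eq_or_lt with h' | h'
    · exact h'
    · exact absurd h (ln_lt_of_lt h').ne
  · rcases h'.eq_or_lt with h' | h'
    · exact h'.symm
    · exact absurd h (ln_lt_of_lt h').ne'

lemma ln_radical [IsArtinianRing Λ] {X : ModuleCat.{0} Λ} (hX : IsUniserial Λ X)
    [Module.Finite Λ X] [Nontrivial X] : ln Λ (radical Λ X) + 1 = ln Λ X := by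
  have : IsSimpleModule Λ (X ⧸ radical Λ X) := isSimpleModule_iff_isCoatom.2 hX.isCoatom_radical
  rw [← ln_add (radical Λ X), ln_simple (M := X ⧸ radical Λ X)]

/-- A uniserial module has submodules of every length up to its own. -/
lemma IsUniserial.exists_ln [IsArtinianRing Λ] (n : ℕ) : ∀ {X : ModuleCat.{0} Λ},
    IsUniserial Λ X → Module.Finite Λ X → ln Λ X = n → ∀ q ≤ n,
    ∃ K : Submodule Λ X, ln Λ K = q := by
  induction n with
  | zero =>
    intro X hX _ hn q hq
    exact ⟨⊤, by rw [ln_equiv Submodule.topEquiv]; omega⟩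
  | succ n ih =>
    intro X hX _ hn q hq
    rcases Nat.lt_or_ge n q with h | h
    · exact ⟨⊤, by rw [ln_equiv Submodule.topEquiv]; omega⟩
    · have : Nontrivial X := by
        by_contra h0
        rw [not_nontrivial_iff_subsingleton, ← ln_eq_zero (Λ := Λ)] at h0
        omega
      have h1 := ln_radical hX
      obtain ⟨K, hK⟩ := ih (X := ModuleCat.of Λ (radical Λ X))
        (hX.of_inj (radical Λ X).subtype (radical Λ X).subtype_injective)
        inferInstance (by change ln Λ (radical Λ X) = n; omega) q h
      refine ⟨K.map (radical Λ X).subtype, ?_⟩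
      rw [← hK]
      exact (ln_equiv (Submodule.equivMapOfInjective _ (Submodule.subtype_injective _) K)).symm

/-! ### Projective covers and syzygies -/

/-- Uniqueness of projective covers: a lift `g` of `f` through `f'` is onto because `ker f'` is
superfluous, and a section `s` of `g` is onto because `ker f` is. -/
lemma IsProjCover.unique {P P' M : ModuleCat.{0} Λ} {f : P →ₗ[Λ] M} {f' : P' →ₗ[Λ] M}
    (hf : IsProjCover Λ f) (hf' : IsProjCover Λ f') :
    ∃ e : P ≃ₗ[Λ] P', f' ∘ₗ e.toLinearMap = f := by
  obtain ⟨hP, hs, hsup⟩ := hf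
  obtain ⟨hP', hs', hsup'⟩ := hf'
  obtain ⟨g, hg⟩ := Module.projective_lifting_property f' f hs'
  have hgs : Function.Surjective g := by
    rw [← LinearMap.range_eq_top]
    refine hsup' _ (eq_top_iff.2 fun y _ => ?_)
    obtain ⟨x, hx⟩ := hs (f' y)
    rw [Submodule.mem_sup]
    refine ⟨g x, ⟨x, rfl⟩, y - g x, ?_, by abel⟩
    have : f' (g x) = f x := LinearMap.congr_fun hg x
    simp [this, hx]
  obtain ⟨s, hgs'⟩ := Module.projective_lifting_property g LinearMap.id hgs
  have hss : Function.Surjective s := by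
    rw [← LinearMap.range_eq_top]
    refine hsup _ (eq_top_iff.2 fun y _ => ?_)
    rw [Submodule.mem_sup]
    refine ⟨s (g y), ⟨g y, rfl⟩, y - s (g y), ?_, by abel⟩
    have h1 : g (s (g y)) = g y := LinearMap.congr_fun hgs' (g y)
    rw [LinearMap.mem_ker, ← hg]
    simp [h1]
  have hgi : Function.Injective g := by
    intro x y hxy
    obtain ⟨x', rfl⟩ := hss x
    obtain ⟨y', rfl⟩ := hss y
    have h1 : g (s x') = x' := LinearMap.congr_fun hgs' x'
    have h2 : g (s y') = y' := LinearMap.congr_fun hgs' y'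
    rw [h1, h2] at hxy
    rw [hxy]
  exact ⟨LinearEquiv.ofBijective g ⟨hgi, hgs⟩, by ext x; exact LinearMap.congr_fun hg x⟩

lemma IsProjCover.comp_equiv {P M M' : ModuleCat.{0} Λ} {f : P →ₗ[Λ] M} (hf : IsProjCover Λ f)
    (e : M ≃ₗ[Λ] M') : IsProjCover Λ (e.toLinearMap ∘ₗ f) := by
  refine ⟨hf.1, e.surjective.comp hf.2.1, ?_⟩
  rw [LinearEquiv.ker_comp]
  exact hf.2.2

lemma IsSyzygy.congr {Y Y' M M' : ModuleCat.{0} Λ} (h : IsSyzygy Λ Y M) (e : Y ≃ₗ[Λ] Y')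
    (e' : M ≃ₗ[Λ] M') : IsSyzygy Λ Y' M' := by
  obtain ⟨P, f, hf, ⟨g⟩⟩ := h
  refine ⟨P, e'.toLinearMap ∘ₗ f, hf.comp_equiv e', ⟨?_⟩⟩
  exact (e.symm.trans g).trans (LinearEquiv.ofEq _ _ (LinearEquiv.ker_comp e' f).symm)

lemma IsSyzygy.unique {Y Y' M : ModuleCat.{0} Λ} (h : IsSyzygy Λ Y M) (h' : IsSyzygy Λ Y' M) :
    Nonempty (Y ≃ₗ[Λ] Y') := by
  obtain ⟨P, f, hf, ⟨g⟩⟩ := h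
  obtain ⟨P', f', hf', ⟨g'⟩⟩ := h'
  obtain ⟨e, he⟩ := hf.unique hf'
  have : (LinearMap.ker f).map (e : P →ₗ[Λ] P') = LinearMap.ker f' := by
    ext y
    constructor
    · rintro ⟨x, hx, rfl⟩
      rw [← he] at hx
      exact hx
    · intro hy
      refine ⟨e.symm y, ?_, by simp⟩
      rw [← he]
      simpa using hy
  exact ⟨g.trans ((e.submoduleMap _).trans ((LinearEquiv.ofEq _ _ this).trans g'.symm))⟩

lemma IsNthSyzygy.congr {n : ℕ} : ∀ {Y Y' M M' : ModuleCat.{0} Λ}, IsNthSyzygy Λ n Y M →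
    (Y ≃ₗ[Λ] Y') → (M ≃ₗ[Λ] M') → IsNthSyzygy Λ n Y' M' := by
  induction n with
  | zero =>
    rintro Y Y' M M' ⟨f⟩ e e'
    exact ⟨e.symm.trans (f.trans e')⟩
  | succ n ih =>
    rintro Y Y' M M' ⟨Z, hZ, hY⟩ e e'
    exact ⟨Z, hZ.congr (LinearEquiv.refl _ _) e', ih hY e (LinearEquiv.refl _ _)⟩

lemma IsNthSyzygy.unique {n : ℕ} : ∀ {Y Y' M : ModuleCat.{0} Λ}, IsNthSyzygy Λ n Y M →
    IsNthSyzygy Λ n Y' M → Nonempty (Y ≃ₗ[Λ] Y') := by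
  induction n with
  | zero =>
    rintro Y Y' M ⟨f⟩ ⟨f'⟩
    exact ⟨f.trans f'.symm⟩
  | succ n ih =>
    rintro Y Y' M ⟨Z, hZ, hY⟩ ⟨Z', hZ', hY'⟩
    obtain ⟨e⟩ := hZ.unique hZ'
    exact ih (hY.congr (LinearEquiv.refl _ _) e) hY'

lemma isNthSyzygy_one {Y M : ModuleCat.{0} Λ} : IsNthSyzygy Λ 1 Y M ↔ IsSyzygy Λ Y M := by
  constructor
  · rintro ⟨Z, hZ, ⟨e⟩⟩
    exact hZ.congr e.symm (LinearEquiv.refl _ _)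
  · intro h
    exact ⟨Y, h, ⟨LinearEquiv.refl _ _⟩⟩

/-- The definition of `Ω ^ (n + 1)` peels off the first syzygy; this peels off the last one. -/
lemma isNthSyzygy_succ {n : ℕ} : ∀ {Y M : ModuleCat.{0} Λ}, IsNthSyzygy Λ (n + 1) Y M ↔
    ∃ Z : ModuleCat.{0} Λ, IsNthSyzygy Λ n Z M ∧ IsSyzygy Λ Y Z := by
  induction n with
  | zero =>
    intro Y M
    rw [isNthSyzygy_one]
    constructor
    · intro h
      exact ⟨M, ⟨LinearEquiv.refl _ _⟩, h⟩
    · rintro ⟨Z, ⟨e⟩, h⟩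
      exact h.congr (LinearEquiv.refl _ _) e
  | succ n ih =>
    intro Y M
    constructor
    · rintro ⟨Z, hZ, hY⟩
      obtain ⟨W, hW, hY'⟩ := ih.1 hY
      exact ⟨W, ⟨Z, hZ, hW⟩, hY'⟩
    · rintro ⟨W, ⟨Z, hZ, hW⟩, hY⟩
      exact ⟨Z, hZ, ih.2 ⟨W, hW, hY⟩⟩

/-- The syzygy of a projective module is zero. -/
lemma isSyzygy_of_projective {Y M : ModuleCat.{0} Λ} (hM : Module.Projective Λ M)
    (hY : Subsingleton Y) : IsSyzygy Λ Y M := by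
  refine ⟨M, LinearMap.id, ⟨hM, Function.surjective_id, fun A hA => ?_⟩, ⟨?_⟩⟩
  · simpa using hA
  · rw [LinearMap.ker_id]
    exact LinearEquiv.ofSubsingleton _ _

lemma IsSyzygy.subsingleton {Y M : ModuleCat.{0} Λ} (h : IsSyzygy Λ Y M)
    (hM : Module.Projective Λ M) : Subsingleton Y := by
  obtain ⟨e⟩ := h.unique (isSyzygy_of_projective (Y := ModuleCat.of Λ PUnit) hM
    (inferInstanceAs (Subsingleton PUnit)))
  exact e.toEquiv.subsingleton_congr.2 (inferInstanceAs (Subsingleton PUnit))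

lemma projective_of_subsingleton (M : ModuleCat.{0} Λ) [Subsingleton M] :
    Module.Projective Λ M :=
  Module.Projective.of_equiv (LinearEquiv.ofSubsingleton PUnit.{1} M)

lemma exists_syzygy_of_projective {M : ModuleCat.{0} Λ} (hM : Module.Projective Λ M) :
    ∃ Y, IsSyzygy Λ Y M ∧ Module.Projective Λ Y := by
  have : Subsingleton (ModuleCat.of Λ PUnit) := inferInstanceAs (Subsingleton PUnit)
  exact ⟨ModuleCat.of Λ PUnit, isSyzygy_of_projective hM this, projective_of_subsingleton _⟩

lemma PdimLE.succ {n : ℕ} {M : ModuleCat.{0} Λ} (h : PdimLE Λ M n) : PdimLE Λ M (n + 1) := by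
  obtain ⟨Y, hY, hp⟩ := h
  obtain ⟨Z, hZ, hp'⟩ := exists_syzygy_of_projective hp
  exact ⟨Z, isNthSyzygy_succ.2 ⟨Y, hY, hZ⟩, hp'⟩

lemma PdimLE.congr {n : ℕ} {M M' : ModuleCat.{0} Λ} (h : PdimLE Λ M n) (e : M ≃ₗ[Λ] M') :
    PdimLE Λ M' n := by
  obtain ⟨Y, hY, hp⟩ := h
  exact ⟨Y, hY.congr (LinearEquiv.refl _ _) e, hp⟩

/-- The image of a superfluous submodule under any homomorphism is superfluous. -/
lemma superfluous_map {P Q : Type} [AddCommGroup P] [Module Λ P] [AddCommGroup Q] [Module Λ Q]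
    (g : P →ₗ[Λ] Q) {K : Submodule Λ P} (hK : ∀ A : Submodule Λ P, A ⊔ K = ⊤ → A = ⊤)
    (B : Submodule Λ Q) (hB : B ⊔ K.map g = ⊤) : B = ⊤ := by
  have h : B.comap g = ⊤ := by
    refine hK _ (eq_top_iff.2 fun x _ => ?_)
    obtain ⟨b, hb, _, ⟨k, hk, rfl⟩, h⟩ := Submodule.mem_sup.1 (hB.ge (Submodule.mem_top (x := g x)))
    refine Submodule.mem_sup.2 ⟨x - k, ?_, k, hk, by abel⟩
    rw [Submodule.mem_comap, map_sub, ← h, add_sub_cancel_right]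
    exact hb
  have h' : K.map g ≤ B := Submodule.map_le_iff_le_comap.2 (h ▸ le_top)
  rwa [sup_eq_left.2 h'] at hB

/-- A direct sum of two projective covers is a projective cover. -/
lemma IsProjCover.prod {P M P' M' : ModuleCat.{0} Λ} {f : P →ₗ[Λ] M} {f' : P' →ₗ[Λ] M'}
    (hf : IsProjCover Λ f) (hf' : IsProjCover Λ f') :
    IsProjCover Λ (P := ModuleCat.of Λ (P × P')) (M := ModuleCat.of Λ (M × M'))
      (f.prodMap f') := by
  obtain ⟨hP, hs, hsup⟩ := hf
  obtain ⟨hP', hs', hsup'⟩ := hf'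
  refine ⟨inferInstanceAs (Module.Projective Λ (P × P')), Function.Surjective.prodMap hs hs', ?_⟩
  intro A hA
  refine superfluous_map (LinearMap.inl Λ P P') hsup _ ?_
  refine superfluous_map (LinearMap.inr Λ P P') hsup' _ ?_
  have hA' : (A ⊔ LinearMap.ker (f.prodMap f') : Submodule Λ (P × P')) = ⊤ := hA
  rw [eq_top_iff, ← hA', sup_assoc]
  refine sup_le_sup le_rfl fun x hx => ?_
  rw [LinearMap.mem_ker, LinearMap.prodMap_apply, Prod.mk_eq_zero] at hx
  exact Submodule.mem_sup.2 ⟨(x.1, 0), ⟨x.1, hx.1, rfl⟩, (0, x.2), ⟨x.2, hx.2, rfl⟩, by simp⟩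

/-- The product submodule `A × B ⊆ M × N` is the product of the modules `A` and `B`. -/
def prodSubEquiv {M N : Type} [AddCommGroup M] [Module Λ M] [AddCommGroup N] [Module Λ N]
    (A : Submodule Λ M) (B : Submodule Λ N) : A.prod B ≃ₗ[Λ] A × B where
  toFun x := (⟨x.1.1, x.2.1⟩, ⟨x.1.2, x.2.2⟩)
  invFun x := ⟨(x.1.1, x.2.1), x.1.2, x.2.2⟩
  map_add' _ _ := rfl
  map_smul' _ _ := rfl
  left_inv _ := rfl
  right_inv _ := rfl

lemma IsSyzygy.prod {Y M Y' M' : ModuleCat.{0} Λ} (h : IsSyzygy Λ Y M) (h' : IsSyzygy Λ Y' M') :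
    IsSyzygy Λ (ModuleCat.of Λ (Y × Y')) (ModuleCat.of Λ (M × M')) := by
  obtain ⟨P, f, hf, ⟨g⟩⟩ := h
  obtain ⟨P', f', hf', ⟨g'⟩⟩ := h'
  have h : LinearMap.ker (f.prodMap f') = (LinearMap.ker f).prod (LinearMap.ker f') :=
    LinearMap.ker_prodMap f f'
  exact ⟨_, _, hf.prod hf', ⟨(g.prodCongr g').trans
    ((LinearEquiv.ofEq _ _ h).trans (prodSubEquiv _ _)).symm⟩⟩

lemma IsNthSyzygy.prod {n : ℕ} : ∀ {Y M Y' M' : ModuleCat.{0} Λ}, IsNthSyzygy Λ n Y M →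
    IsNthSyzygy Λ n Y' M' →
    IsNthSyzygy Λ n (ModuleCat.of Λ (Y × Y')) (ModuleCat.of Λ (M × M')) := by
  induction n with
  | zero =>
    rintro Y M Y' M' ⟨e⟩ ⟨e'⟩
    exact ⟨e.prodCongr e'⟩
  | succ n ih =>
    rintro Y M Y' M' ⟨Z, hZ, hY⟩ ⟨Z', hZ', hY'⟩
    exact ⟨_, hZ.prod hZ', ih hY hY'⟩

/-- Over an artinian ring, a bound on the projective dimension of the indecomposable finitely
generated modules bounds the global dimension. -/
lemma globalDimLE_of_indec [IsArtinianRing Λ] {n : ℕ}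
    (h : ∀ M : ModuleCat.{0} Λ, Module.Finite Λ M → Indec Λ M → PdimLE Λ M n) :
    GlobalDimLE Λ n := by
  suffices H : ∀ l, ∀ M : ModuleCat.{0} Λ, Module.Finite Λ M → ln Λ M = l → PdimLE Λ M n from
    fun M hM => H _ M hM rfl
  intro l
  induction l using Nat.strong_induction_on with
  | _ l ih =>
    intro M hM hl
    rcases subsingleton_or_nontrivial M with h0 | h0
    · have h1 : PdimLE Λ M 0 := ⟨M, ⟨LinearEquiv.refl _ _⟩, projective_of_subsingleton M⟩
      exact Nat.rec h1 (fun _ h => h.succ) n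
    · by_cases hi : Indec Λ M
      · exact h M hM hi
      · simp only [Indec, h0, true_and, not_forall, not_or] at hi
        obtain ⟨A, B, hAB, hA, hB⟩ := hi
        have hA' : A ≠ ⊤ := fun h => hB (by simpa [h] using hAB.disjoint)
        have hB' : B ≠ ⊤ := fun h => hA (by simpa [h] using hAB.disjoint)
        obtain ⟨Y, hY, hYp⟩ := ih _ (hl ▸ ln_lt hA') (ModuleCat.of Λ A)
          (inferInstanceAs (Module.Finite Λ A)) rfl
        obtain ⟨Y', hY', hYp'⟩ := ih _ (hl ▸ ln_lt hB') (ModuleCat.of Λ B)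
          (inferInstanceAs (Module.Finite Λ B)) rfl
        exact PdimLE.congr ⟨_, hY.prod hY', inferInstanceAs (Module.Projective Λ (Y × Y'))⟩
          (Submodule.prodEquivOfIsCompl A B hAB)

end General

section Multiplicity

variable {Λ : Type} [Ring Λ]

/-! ### Additive invariants separating indecomposable modules -/

/-- The trace of `X` in `M` along `p`: the sum of the images of all maps `X → M` satisfying `p`. -/
def trace (X : ModuleCat.{0} Λ) (p : ∀ M : ModuleCat.{0} Λ, (X →ₗ[Λ] M) → Prop)
    (M : ModuleCat.{0} Λ) : Submodule Λ M :=
  ⨆ f : {f : X →ₗ[Λ] M // p M f}, LinearMap.range f.1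

/-- A map `X → M` is radical if no map `M → X` makes the composite `X → M → X` bijective. -/
def RadMap (X M : ModuleCat.{0} Λ) (f : X →ₗ[Λ] M) : Prop :=
  ∀ g : M →ₗ[Λ] X, ¬ Function.Bijective (g ∘ₗ f)

/-- The class of maps `p` is closed under postcomposition. -/
def PostClosed (X : ModuleCat.{0} Λ) (p : ∀ M : ModuleCat.{0} Λ, (X →ₗ[Λ] M) → Prop) : Prop :=
  ∀ (M M' : ModuleCat.{0} Λ) (f : X →ₗ[Λ] M) (g : M →ₗ[Λ] M'), p M f → p M' (g ∘ₗ f)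

lemma radMap_postClosed (X : ModuleCat.{0} Λ) : PostClosed X (RadMap X) :=
  fun _ _ _ g hf h => hf (h ∘ₗ g)

lemma true_postClosed (X : ModuleCat.{0} Λ) : PostClosed X (fun _ _ => True) :=
  fun _ _ _ _ _ => trivial

variable {X : ModuleCat.{0} Λ} {p : ∀ M : ModuleCat.{0} Λ, (X →ₗ[Λ] M) → Prop}

lemma map_trace_le (hp : PostClosed X p) {M M' : ModuleCat.{0} Λ} (g : M →ₗ[Λ] M') :
    (trace X p M).map g ≤ trace X p M' := by
  unfold trace
  rw [Submodule.map_iSup]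
  refine iSup_le fun f => ?_
  rw [← LinearMap.range_comp]
  exact le_iSup (fun f : {f : X →ₗ[Λ] M' // p M' f} => LinearMap.range f.1)
    ⟨g ∘ₗ f.1, hp _ _ _ g f.2⟩

lemma ln_trace_prod [IsArtinianRing Λ] (hp : PostClosed X p) {A B C : ModuleCat.{0} Λ}
    (e : C ≃ₗ[Λ] A × B) [Module.Finite Λ A] [Module.Finite Λ B] :
    ln Λ (trace X p C) = ln Λ (trace X p A) + ln Λ (trace X p B) := by
  have h : (trace X p C).map e.toLinearMap = (trace X p A).prod (trace X p B) := by
    apply le_antisymm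
    · rintro _ ⟨x, hx, rfl⟩
      exact ⟨map_trace_le hp (LinearMap.fst Λ A B ∘ₗ e.toLinearMap) ⟨x, hx, rfl⟩,
        map_trace_le hp (LinearMap.snd Λ A B ∘ₗ e.toLinearMap) ⟨x, hx, rfl⟩⟩
    · rintro ⟨a, b⟩ ⟨ha, hb⟩
      have h1 := map_trace_le hp (e.symm.toLinearMap ∘ₗ LinearMap.inl Λ A B) ⟨a, ha, rfl⟩
      have h2 := map_trace_le hp (e.symm.toLinearMap ∘ₗ LinearMap.inr Λ A B) ⟨b, hb, rfl⟩
      refine ⟨_, add_mem h1 h2, ?_⟩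
      simp
  rw [ln_equiv ((e.submoduleMap _).trans ((LinearEquiv.ofEq _ _ h).trans (prodSubEquiv _ _))),
    ln_prod]

/-- A Krull–Schmidt type invariant of `M`: the length of the trace of `X` in `M` modulo the
trace of the radical maps. It is additive, and by `mult_self_pos`, `mult_eq_zero` it detects
whether the indecomposable module `X` is a direct summand. -/
def mult (X M : ModuleCat.{0} Λ) : ℤ :=
  (ln Λ (trace X (fun _ _ => True) M) : ℤ) - ln Λ (trace X (RadMap X) M)

lemma mult_prod [IsArtinianRing Λ] {A B C : ModuleCat.{0} Λ}
    (e : C ≃ₗ[Λ] A × B) [Module.Finite Λ A] [Module.Finite Λ B] :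
    mult X C = mult X A + mult X B := by
  unfold mult
  rw [ln_trace_prod (true_postClosed X) e, ln_trace_prod (radMap_postClosed X) e]
  push_cast
  ring

/-- If all maps `X → M` are radical, the two traces in the definition of `mult` agree. -/
lemma mult_eq_zero_of_radMap {M : ModuleCat.{0} Λ} (h : ∀ f : X →ₗ[Λ] M, RadMap X M f) :
    mult X M = 0 := by
  have : trace X (fun _ _ => True) M = trace X (RadMap X) M := by
    apply le_antisymm
    · exact iSup_le fun f => le_iSup (fun f : {f : X →ₗ[Λ] M // RadMap X M f} =>
        LinearMap.range f.1) ⟨f.1, h f.1⟩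
    · exact iSup_le fun f => le_iSup (fun f : {f : X →ₗ[Λ] M // True} =>
        LinearMap.range f.1) ⟨f.1, trivial⟩
  rw [mult, this, sub_self]

lemma exists_retract {M : ModuleCat.{0} Λ} (h : mult X M ≠ 0) :
    ∃ (f : X →ₗ[Λ] M) (g : M →ₗ[Λ] X), g ∘ₗ f = LinearMap.id := by
  by_contra hc
  refine h (mult_eq_zero_of_radMap fun f g hb => hc ⟨f, ?_⟩)
  refine ⟨(LinearEquiv.ofBijective _ hb).symm.toLinearMap ∘ₗ g, ?_⟩
  ext x
  exact (LinearEquiv.ofBijective _ hb).symm_apply_apply x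

lemma mult_projective (hX : ¬ Module.Projective Λ X) {P : ModuleCat.{0} Λ}
    (hP : Module.Projective Λ P) : mult X P = 0 := by
  by_contra h
  obtain ⟨f, g, hfg⟩ := exists_retract h
  exact hX (Module.Projective.of_split f g hfg)

lemma mult_eq_zero [hX : Nontrivial X] {Y : ModuleCat.{0} Λ} (hY : Indec Λ Y)
    (h : ¬ Nonempty (X ≃ₗ[Λ] Y)) : mult X Y = 0 := by
  by_contra h0
  obtain ⟨f, g, hfg⟩ := exists_retract h0
  have hgf : ∀ x, g (f x) = x := fun x => LinearMap.congr_fun hfg x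
  have hc : IsCompl (LinearMap.range f) (LinearMap.ker g) := by
    refine isCompl_iff.2 ⟨?_, ?_⟩
    · rw [Submodule.disjoint_def]
      rintro _ ⟨x, rfl⟩ hx
      rw [LinearMap.mem_ker, hgf] at hx
      rw [hx, map_zero]
    · rw [codisjoint_iff, eq_top_iff]
      intro y _
      exact Submodule.mem_sup.2 ⟨f (g y), ⟨g y, rfl⟩, y - f (g y), by simp [hgf], by abel⟩
  rcases hY.2 _ _ hc with h1 | h1
  · obtain ⟨x, hx⟩ := exists_ne (0 : X)
    have hfx : f x ∈ LinearMap.range f := ⟨x, rfl⟩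
    rw [h1, Submodule.mem_bot] at hfx
    exact hx (by rw [← hgf x, hfx, map_zero])
  · refine h ⟨LinearEquiv.ofBijective f ⟨fun x y hxy => ?_, ?_⟩⟩
    · rw [← hgf x, hxy, hgf]
    · intro y
      exact ⟨g y, LinearMap.ker_eq_bot.1 h1 (hgf (g y))⟩

lemma mult_nonneg [IsArtinianRing Λ] {M : ModuleCat.{0} Λ} [Module.Finite Λ M] :
    0 ≤ mult X M := by
  have h : trace X (RadMap X) M ≤ trace X (fun _ _ => True) M :=
    iSup_le fun f => le_iSup (fun f : {f : X →ₗ[Λ] M // True} =>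
        LinearMap.range f.1) ⟨f.1, trivial⟩
  unfold mult
  rcases h.eq_or_lt with h | h
  · rw [h]; omega
  · have := ln_lt_of_lt h; omega

/-- A surjective endomorphism of `X` is bijective, hence not radical, so the trace of the radical
endomorphisms lies in the radical of `X`. -/
lemma mult_self_pos [IsArtinianRing Λ] [Module.Finite Λ X] [Nontrivial X]
    (hX : IsUniserial Λ X) : 0 < mult X X := by
  have h1 : trace X (fun _ _ => True) X = ⊤ := by
    refine eq_top_iff.2 fun x _ => ?_
    exact (le_iSup (fun f : {f : X →ₗ[Λ] X // True} => LinearMap.range f.1)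
      ⟨LinearMap.id, trivial⟩) ⟨x, rfl⟩
  have h2 : trace X (RadMap X) X ≤ radical Λ X := by
    refine iSup_le fun f => le_radical fun h => ?_
    have hs := LinearMap.range_eq_top.1 h
    exact f.2 LinearMap.id (bijective_of_surj_of_ln f.1 hs rfl)
  have h3 : trace X (RadMap X) X < trace X (fun _ _ => True) X :=
    h1 ▸ h2.trans_lt hX.isCoatom_radical.1.lt_top
  have := ln_lt_of_lt h3
  unfold mult
  omega

/-- A special case of the Krull–Schmidt theorem, by additivity of `mult X`. -/
lemma IsSummand.iso_of_prod [IsArtinianRing Λ] {M A B : ModuleCat.{0} Λ} [Module.Finite Λ X]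
    (hXi : Indec Λ X) (hX : IsUniserial Λ X) (hA : Indec Λ A) (hB : Indec Λ B)
    [Module.Finite Λ A] [Module.Finite Λ B] [Module.Finite Λ M] (e : M ≃ₗ[Λ] A × B)
    (h : IsSummand Λ X M) : Nonempty (X ≃ₗ[Λ] A) ∨ Nonempty (X ≃ₗ[Λ] B) := by
  have := hXi.1
  by_contra! hc
  obtain ⟨N, N', hN, ⟨f⟩⟩ := h
  have h1 := mult_prod (X := X) e
  rw [mult_eq_zero hA (not_nonempty_iff.2 hc.1), mult_eq_zero hB (not_nonempty_iff.2 hc.2)] at h1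
  have : Module.Finite Λ (ModuleCat.of Λ N') := inferInstanceAs (Module.Finite Λ N')
  have h2 := mult_prod (X := X) (A := X) (B := ModuleCat.of Λ N') (C := M)
    ((Submodule.prodEquivOfIsCompl N N' hN).symm.trans (f.symm.prodCongr (LinearEquiv.refl _ _)))
  have h3 := mult_self_pos hX
  have h4 := mult_nonneg (X := X) (M := ModuleCat.of Λ N')
  omega

variable [IsArtinianRing Λ]

/-- The invariant `mult X` for nonprojective `X`, as a homomorphism on `K₀`. -/
def multHom (X : ModuleCat.{0} Λ) (hX : ¬ Module.Projective Λ X) : K0 Λ →+ ℤ :=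
  QuotientAddGroup.lift (K0Rel Λ) (FreeAbelianGroup.lift fun M : FGMod Λ => mult X M.1) <| by
    unfold K0Rel
    rw [AddSubgroup.closure_le]
    rintro _ (⟨A, B, C, ⟨e⟩, rfl⟩ | ⟨P, hP, rfl⟩)
    · have := A.2
      have := B.2
      simp [mult_prod e]
    · simp [mult_projective hX hP]

lemma multHom_classOf (X : ModuleCat.{0} Λ) (hX : ¬ Module.Projective Λ X) (M : FGMod Λ) :
    multHom X hX (classOf Λ M) = mult X M.1 := by
  unfold multHom classOf
  erw [QuotientAddGroup.lift_mk]
  exact FreeAbelianGroup.lift_apply_of _ _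

omit [IsArtinianRing Λ] in
lemma classOf_projective {P : FGMod Λ} (hP : Module.Projective Λ P.1) : classOf Λ P = 0 :=
  (QuotientAddGroup.eq_zero_iff _).2 (AddSubgroup.subset_closure (Or.inr ⟨P, hP, rfl⟩))

omit [IsArtinianRing Λ] in
lemma classOf_congr {A B : FGMod Λ} (e : A.1 ≃ₗ[Λ] B.1) : classOf Λ A = classOf Λ B := by
  have h0 : Module.Finite Λ (ModuleCat.of Λ PUnit) := inferInstanceAs (Module.Finite Λ PUnit)
  let Z : FGMod Λ := ⟨ModuleCat.of Λ PUnit, h0⟩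
  have hs : Subsingleton Z.1 := inferInstanceAs (Subsingleton PUnit)
  have hZ : classOf Λ Z = 0 := classOf_projective (projective_of_subsingleton Z.1)
  have h : classOf Λ A - classOf Λ B - classOf Λ Z = 0 := by
    refine (QuotientAddGroup.eq_zero_iff _).2
      (AddSubgroup.subset_closure (Or.inl ⟨B, Z, A, ⟨?_⟩, rfl⟩))
    exact e.trans (LinearEquiv.prodUnique (M₂ := PUnit)).symm
  rwa [hZ, sub_zero, sub_eq_zero] at h

/-- The classes of pairwise non-isomorphic nonprojective uniserial modules are linearly
independent in `K₀`. -/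
lemma linearIndependent_classOf {ι : Type} (v : ι → FGMod Λ)
    (hu : ∀ i, IsUniserial Λ (v i).1) (hn : ∀ i, Nontrivial (v i).1)
    (hp : ∀ i, ¬ Module.Projective Λ (v i).1)
    (hd : ∀ i j, Nonempty ((v i).1 ≃ₗ[Λ] (v j).1) → i = j) :
    LinearIndependent ℤ (fun i => classOf Λ (v i)) := by
  classical
  rw [linearIndependent_iff']
  intro s g hg i hi
  have h := congrArg (multHom (v i).1 (hp i)) hg
  rw [map_sum, map_zero, Finset.sum_eq_single_of_mem i hi] at h
  · rw [map_zsmul, multHom_classOf, smul_eq_mul, mul_eq_zero] at h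
    have := (v i).2
    have := hn i
    exact h.resolve_right (mult_self_pos (hu i)).ne'
  · intro j _ hij
    have := hn i
    rw [map_zsmul, multHom_classOf, mult_eq_zero ((hu j).indec (hn j)), smul_zero]
    exact fun h => hij (hd i j h).symm

/-- Ranks of subgroups of `K₀` generated by a set of classes together with zero. -/
lemma rank_closure {ι : Type} (v : ι → FGMod Λ)
    (hu : ∀ i, IsUniserial Λ (v i).1) (hn : ∀ i, Nontrivial (v i).1)
    (hp : ∀ i, ¬ Module.Projective Λ (v i).1)
    (hd : ∀ i j, Nonempty ((v i).1 ≃ₗ[Λ] (v j).1) → i = j)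
    (s : Set (K0 Λ)) (h1 : ∀ i, classOf Λ (v i) ∈ s)
    (h2 : ∀ x ∈ s, x = 0 ∨ ∃ i, x = classOf Λ (v i)) :
    Module.rank ℤ (AddSubgroup.closure s) = Cardinal.lift.{1} (Cardinal.mk ι) := by
  have h := linearIndependent_classOf v hu hn hp hd
  have hs : AddSubgroup.closure s =
      (Submodule.span ℤ (Set.range fun i => classOf Λ (v i))).toAddSubgroup := by
    rw [Submodule.span_int_eq_addSubgroupClosure]
    apply le_antisymm
    · rw [AddSubgroup.closure_le]
      intro x hx
      rcases h2 x hx with rfl | ⟨i, rfl⟩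
      · exact zero_mem _
      · exact AddSubgroup.subset_closure ⟨i, rfl⟩
    · refine AddSubgroup.closure_mono ?_
      rintro _ ⟨i, rfl⟩
      exact h1 i
  rw [hs]
  have := rank_span h
  have h' := Cardinal.mk_range_eq_of_injective h.injective
  rw [Cardinal.lift_id'.{0, 1}] at h'
  exact this.trans h'

end Multiplicity

section Structure

variable {R Λ : Type} [CommRing R] [Ring Λ] [Algebra R Λ] (pres : CyclicNakayama R Λ)

/-! ### Indecomposable modules over a cyclic Nakayama algebra -/

instance (i : ZMod pres.N) : IsSimpleModule Λ (pres.S i) := pres.S_simple i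

instance (i : ZMod pres.N) : Module.Finite Λ (pres.P i) := pres.P_finite i

lemma CyclicNakayama.isArtinianRing (pres : CyclicNakayama R Λ) : IsArtinianRing Λ := by
  have := pres.artinianBase
  have := pres.finiteAlgebra
  exact IsArtinianRing.of_finite R Λ

/-- `X` is the finitely generated indecomposable module with top `S i` and length `l`. -/
structure Typ (X : ModuleCat.{0} Λ) (i : ZMod pres.N) (l : ℕ) : Prop where
  fin : Module.Finite Λ X
  indec : Indec Λ X
  top : TopIso Λ X (pres.S i)
  len : ln Λ X = l

variable {pres} {X Y : ModuleCat.{0} Λ} {i j : ZMod pres.N} {l l' : ℕ}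

lemma Typ.uni (h : Typ pres X i l) : IsUniserial Λ X := pres.nakayama X h.fin h.indec

lemma Typ.of_uni (hX : IsUniserial Λ X) (hf : Module.Finite Λ X) (hn : Nontrivial X)
    (f : X →ₗ[Λ] pres.S i) (h : Function.Surjective f) (hl : ln Λ X = l) : Typ pres X i l :=
  ⟨hf, hX.indec hn, (topIso_iff hX).2 ⟨f, h⟩, hl⟩

lemma Typ.exists_top (h : Typ pres X i l) : ∃ f : X →ₗ[Λ] pres.S i, Function.Surjective f := by
  have := h.fin
  have := h.indec.1
  exact (topIso_iff h.uni).1 h.top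

lemma Typ.congr (h : Typ pres X i l) (e : X ≃ₗ[Λ] Y) : Typ pres Y i l := by
  obtain ⟨f, hf⟩ := h.exists_top
  have := h.fin
  have := h.indec.1
  exact Typ.of_uni (h.uni.of_inj e.symm.toLinearMap e.symm.injective) (Module.Finite.equiv e)
    e.injective.nontrivial (f ∘ₗ e.symm.toLinearMap) (hf.comp e.symm.surjective)
    (by rw [← ln_equiv e, h.len])

lemma Typ.index_unique (h : Typ pres X i l) (h' : Typ pres X j l') : i = j := by
  obtain ⟨e⟩ := h.top
  obtain ⟨e'⟩ := h'.top
  exact pres.S_distinct i j ⟨e.symm.trans e'⟩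

variable [IsArtinianRing Λ]

lemma Typ.one_le (h : Typ pres X i l) : 1 ≤ l := by
  have := h.fin
  have := h.indec.1
  have := ln_pos (Λ := Λ) (M := X)
  have := h.len
  omega

variable (pres) in
/-- `P i` is indecomposable: the superfluous kernel of `P i → S i` contains all its proper
submodules. -/
lemma typ_P (i : ZMod pres.N) : Typ pres (pres.P i) i (pres.c i) := by
  obtain ⟨f, hP, hf, hs⟩ := pres.P_cover i
  have hl := ln_of_hasLength (pres.P_length i)
  have hn : Nontrivial (pres.P i) := by
    by_contra h0
    rw [not_nontrivial_iff_subsingleton, ← ln_eq_zero (Λ := Λ)] at h0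
    have := pres.two_le_c i
    omega
  have hk : IsCoatom (LinearMap.ker f) := LinearMap.isCoatom_ker_of_surjective hf
  have hle : ∀ A : Submodule Λ (pres.P i), A ≠ ⊤ → A ≤ LinearMap.ker f := by
    intro A hA
    by_contra h
    exact hA (hs A (hk.2 _ (right_lt_sup.2 h)))
  have hi : Indec Λ (pres.P i) := by
    refine ⟨hn, fun A B hAB => ?_⟩
    by_contra! h
    have hA : A ≠ ⊤ := fun hA => h.2 (by simpa [hA] using hAB.disjoint)
    have hB : B ≠ ⊤ := fun hB => h.1 (by simpa [hB] using hAB.disjoint)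
    exact hk.1 (top_le_iff.1 (hAB.codisjoint.top_le.trans (sup_le (hle A hA) (hle B hB))))
  exact Typ.of_uni (pres.nakayama _ (pres.P_finite i) hi) (pres.P_finite i) hn f hf hl

omit [IsArtinianRing Λ] in
variable (pres) in
lemma exists_typ (hX : Module.Finite Λ X) (hi : Indec Λ X) : ∃ i l, Typ pres X i l := by
  have hu := pres.nakayama X hX hi
  have := hi.1
  have : IsSimpleModule Λ (X ⧸ radical Λ X) := isSimpleModule_iff_isCoatom.2 hu.isCoatom_radical
  obtain ⟨i, h⟩ := pres.S_complete (ModuleCat.of Λ (X ⧸ radical Λ X)) this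
  exact ⟨i, _, hX, hi, h, rfl⟩

/-- The projective cover of the indecomposable module with top `S i` is `P i`. -/
lemma Typ.exists_cover (h : Typ pres X i l) :
    ∃ π : pres.P i →ₗ[Λ] X, IsProjCover Λ π ∧ ln Λ (LinearMap.ker π) + l = pres.c i := by
  have := h.fin
  have := h.indec.1
  have hP := typ_P pres i
  have := hP.indec.1
  have := pres.P_projective i
  obtain ⟨f, hf⟩ := hP.exists_top
  obtain ⟨g, hg⟩ := h.exists_top
  obtain ⟨π, hπ⟩ := Module.projective_lifting_property g f hg
  have hs : Function.Surjective π := by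
    -- A proper submodule of `X` lies in the radical, so it cannot map onto `S i`.
    rw [← LinearMap.range_eq_top]
    by_contra hr
    have h1 : LinearMap.range π ≤ LinearMap.ker g :=
      (le_radical hr).trans
        (h.uni.radical_eq (LinearMap.isCoatom_ker_of_surjective hg)).le
    have := IsSimpleModule.nontrivial Λ (pres.S i)
    obtain ⟨y, hy⟩ := exists_ne (0 : pres.S i)
    obtain ⟨x, rfl⟩ := hf y
    rw [← hπ] at hy
    exact hy (h1 ⟨x, rfl⟩)
  refine ⟨π, ⟨pres.P_projective i, hs, hP.uni.superfluous ?_⟩, ?_⟩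
  · intro hk
    obtain ⟨y, hy⟩ := exists_ne (0 : X)
    obtain ⟨x, rfl⟩ := hs y
    exact hy (LinearMap.mem_ker.1 (hk ▸ Submodule.mem_top))
  · rw [← h.len, ln_surj π hs, hP.len]

lemma Typ.le (h : Typ pres X i l) : l ≤ pres.c i := by
  obtain ⟨π, -, h⟩ := h.exists_cover
  omega

/-- Top and length determine a module: both quotients of `P i` have the same kernel. -/
lemma Typ.iso (h : Typ pres X i l) (h' : Typ pres Y i l) : Nonempty (X ≃ₗ[Λ] Y) := by
  obtain ⟨π, hπ, hk⟩ := h.exists_cover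
  obtain ⟨π', hπ', hk'⟩ := h'.exists_cover
  have he : LinearMap.ker π = LinearMap.ker π' := (typ_P pres i).uni.eq_of_ln (by omega)
  exact ⟨(π.quotKerEquivOfSurjective hπ.2.1).symm.trans
    ((Submodule.quotEquivOfEq _ _ he).trans (π'.quotKerEquivOfSurjective hπ'.2.1))⟩

/-- A module is projective iff the kernel of its projective cover `P i → X` vanishes. -/
lemma Typ.projective_iff (h : Typ pres X i l) : Module.Projective Λ X ↔ l = pres.c i := by
  constructor
  · intro hp
    obtain ⟨π, hπ, hk⟩ := h.exists_cover
    have hs : IsSyzygy Λ (ModuleCat.of Λ (LinearMap.ker π)) X :=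
      ⟨pres.P i, π, hπ, ⟨LinearEquiv.refl _ _⟩⟩
    have : Subsingleton (LinearMap.ker π) := hs.subsingleton hp
    rw [← ln_eq_zero (Λ := Λ)] at this
    omega
  · rintro rfl
    obtain ⟨e⟩ := (typ_P pres i).iso h
    have := pres.P_projective i
    exact Module.Projective.of_equiv e

/-- The layers of a uniserial module with top `S i` are `S i, S (i + 1), S (i + 2), …`. -/
lemma typ_submodule (n : ℕ) : ∀ {X : ModuleCat.{0} Λ} {i : ZMod pres.N} {l : ℕ},
    Typ pres X i l → ∀ (K : Submodule Λ X) (q : ℕ), ln Λ K = q → q ≠ 0 → q + n = l →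
    Typ pres (ModuleCat.of Λ K) (i + n) q := by
  induction n with
  | zero =>
    intro X i l h K q hK hq hl
    have := h.fin
    have hT : K = ⊤ := h.uni.eq_of_ln (by
      rw [hK, ln_equiv Submodule.topEquiv, h.len]
      omega)
    subst hT
    have := h.congr (Y := ModuleCat.of Λ (⊤ : Submodule Λ X)) Submodule.topEquiv.symm
    simpa [← hl] using this
  | succ n ih =>
    intro X i l h K q hK hq hl
    have := h.fin
    have := h.indec.1
    have h1 := ln_radical h.uni
    have hl' := h.len
    have hKt : K ≠ ⊤ := by
      rintro rfl
      rw [ln_equiv Submodule.topEquiv] at hK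
      omega
    have hrn : radical Λ X ≠ ⊥ := by
      intro hb
      have : Subsingleton (radical Λ X) := by rw [hb]; infer_instance
      rw [← ln_eq_zero (Λ := Λ)] at this
      omega
    have hu : IsUniserial Λ (ModuleCat.of Λ (radical Λ X)) :=
      h.uni.of_inj (radical Λ X).subtype (radical Λ X).subtype_injective
    have ht := pres.layer X h.fin h.indec i h.top hrn
    have hr : Typ pres (ModuleCat.of Λ (radical Λ X)) (i + 1) (q + n) :=
      ⟨inferInstanceAs (Module.Finite Λ (radical Λ X)),
        hu.indec ((Submodule.nontrivial_iff_ne_bot).2 hrn), ht,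
        by change ln Λ (radical Λ X) = _; omega⟩
    have e : (K.comap (radical Λ X).subtype) ≃ₗ[Λ] K :=
      Submodule.comapSubtypeEquivOfLe (le_radical hKt)
    have := ih hr (K.comap (radical Λ X).subtype) q (by rw [← hK]; exact ln_equiv e) hq rfl
    have := this.congr (Y := ModuleCat.of Λ K) e
    rwa [add_assoc, add_comm (1 : ZMod pres.N), ← Nat.cast_succ] at this

lemma Typ.exists_syzygy (h : Typ pres X i l) :
    ∃ Y : ModuleCat.{0} Λ, Module.Finite Λ Y ∧ IsSyzygy Λ Y X := by
  obtain ⟨π, hπ, hk⟩ := h.exists_cover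
  exact ⟨ModuleCat.of Λ (LinearMap.ker π), inferInstanceAs (Module.Finite Λ (LinearMap.ker π)),
    pres.P i, π, hπ, ⟨LinearEquiv.refl _ _⟩⟩

/-- The syzygy of a non-projective quotient of `P i` of length `l` has top `S (i + l)`. -/
lemma Typ.syzygy (h : Typ pres X i l) (hl : l < pres.c i) (hY : IsSyzygy Λ Y X) :
    Typ pres Y (i + l) (pres.c i - l) := by
  obtain ⟨π, hπ, hk⟩ := h.exists_cover
  have hs : IsSyzygy Λ (ModuleCat.of Λ (LinearMap.ker π)) X :=
    ⟨pres.P i, π, hπ, ⟨LinearEquiv.refl _ _⟩⟩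
  obtain ⟨e⟩ := hs.unique hY
  exact (typ_submodule l (typ_P pres i) (LinearMap.ker π) (pres.c i - l) (by omega) (by omega)
    (by omega)).congr e

variable (pres) in
/-- A module with top `S i` and length `l ≤ c i` is obtained as a quotient of `P i`. -/
lemma exists_of_le (i : ZMod pres.N) {l : ℕ} (h1 : 1 ≤ l) (hl : l ≤ pres.c i) :
    ∃ X, Typ pres X i l := by
  have hP := typ_P pres i
  have := hP.indec.1
  obtain ⟨K, hK⟩ := hP.uni.exists_ln _ hP.fin hP.len (pres.c i - l) (by omega)
  have hq := ln_add K
  rw [hP.len, hK] at hq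
  obtain ⟨f, hf⟩ := hP.exists_top
  have hle : K ≤ LinearMap.ker f := by
    rw [← hP.uni.radical_eq (LinearMap.isCoatom_ker_of_surjective hf)]
    refine le_radical fun hT => ?_
    rw [hT, ln_equiv Submodule.topEquiv, hP.len] at hK
    omega
  refine ⟨ModuleCat.of Λ (pres.P i ⧸ K), Typ.of_uni (hP.uni.of_surj K.mkQ K.mkQ_surjective)
    (inferInstanceAs (Module.Finite Λ (pres.P i ⧸ K))) ?_ (K.liftQ f hle) ?_ ?_⟩
  · by_contra h0
    rw [not_nontrivial_iff_subsingleton] at h0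
    have := (ln_eq_zero (Λ := Λ) (M := pres.P i ⧸ K)).2 h0
    omega
  · intro y
    obtain ⟨x, rfl⟩ := hf y
    exact ⟨K.mkQ x, by simp⟩
  · change ln Λ (pres.P i ⧸ K) = l
    omega

end Structure

section OneRelation

/-! ### The Kupisch series of a single relation -/

variable {R Λ : Type} [CommRing R] [Ring Λ] [Algebra R Λ] {pres : CyclicNakayama R Λ}

instance : NeZero pres.N := ⟨by have := pres.three_le_N; omega⟩

section Kupisch

variable (hr : pres.r = 1)
include hr

lemma eq_zero_of_r_eq_one (j : ZMod pres.r) : j = 0 := by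
  have : Subsingleton (ZMod pres.r) := by rw [hr]; infer_instance
  exact Subsingleton.elim _ _

lemma c_of_ne {v : ZMod pres.N} (hv : v ≠ pres.kOdd 0) : pres.c v = pres.c (v + 1) + 1 := by
  by_contra h
  obtain ⟨j, hj⟩ := (pres.relation_starts v).2 h
  rw [eq_zero_of_r_eq_one hr j] at hj
  exact hv hj.symm

/-- Going backwards from the start of the relation, the Kupisch series increases by one at each
step around the cycle. -/
lemma c_sub (k : ℕ) (hk : k < pres.N) :
    pres.c (pres.kOdd 0 - k) = pres.c (pres.kOdd 0) + k := by
  induction k with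
  | zero => simp
  | succ k ih =>
    rw [c_of_ne hr, Nat.cast_succ, show pres.kOdd 0 - ((k : ZMod pres.N) + 1) + 1 =
      pres.kOdd 0 - k by ring, ih (by omega)]
    · omega
    · intro h
      have h0 : ((k + 1 : ℕ) : ZMod pres.N) = 0 := by simpa using h
      rw [ZMod.natCast_eq_zero_iff] at h0
      have := Nat.le_of_dvd (by omega) h0
      omega

lemma exists_c_eq (v : ZMod pres.N) : ∃ k < pres.N, v = pres.kOdd 0 - k ∧
    pres.c v = pres.c (pres.kOdd 0) + k := by
  have hv : v = pres.kOdd 0 - ((pres.kOdd 0 - v).val : ZMod pres.N) := by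
    rw [ZMod.natCast_zmod_val]
    ring
  refine ⟨(pres.kOdd 0 - v).val, ZMod.val_lt _, hv, ?_⟩
  rw [← c_sub hr _ (ZMod.val_lt _), ← hv]

lemma le_c (v : ZMod pres.N) : pres.c (pres.kOdd 0) ≤ pres.c v := by
  obtain ⟨k, -, -, h⟩ := exists_c_eq hr v
  omega

lemma c_lt (v : ZMod pres.N) : pres.c v < pres.c (pres.kOdd 0) + pres.N := by
  obtain ⟨k, hk, -, h⟩ := exists_c_eq hr v
  omega

/-- All indecomposable projectives end at the same vertex `k₂` of the cycle. -/
lemma add_c (v : ZMod pres.N) : v + (pres.c v : ZMod pres.N) = pres.kEven 0 + 1 := by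
  obtain ⟨k, -, hv, h⟩ := exists_c_eq hr v
  rw [h, pres.relation_ends 0, hv]
  push_cast
  ring

/-- For the module with top `S (k₂ + 1 - q)` and length `q`, which ends at the vertex `k₂`, the
length of the syzygy is a multiple of `N`. -/
lemma dvd_c_sub {q : ℕ} (hq : q ≤ pres.c (pres.kEven 0 + 1 - q)) :
    pres.N ∣ pres.c (pres.kEven 0 + 1 - q) - q := by
  rw [← ZMod.natCast_eq_zero_iff, Nat.cast_sub hq]
  have := add_c hr (pres.kEven 0 + 1 - q)
  linear_combination this

lemma dvd_c : pres.N ∣ pres.c (pres.kEven 0 + 1) := by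
  simpa using dvd_c_sub hr (q := 0) (Nat.zero_le _)

end Kupisch

/-! ### Syzygies in the case of a single relation -/

variable [IsArtinianRing Λ] {X Y Z : ModuleCat.{0} Λ} {i : ZMod pres.N} {l s : ℕ}

variable (hr : pres.r = 1)
include hr

/-- A nonzero syzygy of an indecomposable module is a submodule of a projective, so it also ends at
`k₂`, and its top is determined by its length. -/
lemma Typ.syzygy' (h : Typ pres X i l) (hl : l < pres.c i) (hY : IsSyzygy Λ Y X) :
    Typ pres Y (pres.kEven 0 + 1 - (pres.c i - l : ℕ)) (pres.c i - l) := by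
  have h1 := h.syzygy hl hY
  have h2 : pres.kEven 0 + 1 - ((pres.c i - l : ℕ) : ZMod pres.N) = i + l := by
    rw [Nat.cast_sub hl.le, ← add_c hr i]
    ring
  rwa [h2]

omit hr [IsArtinianRing Λ] in
lemma Typ.of_dvd (h : Typ pres X (pres.kEven 0 + 1 - l) s) (hl : pres.N ∣ l) :
    Typ pres X (pres.kEven 0 + 1) s := by
  rw [← ZMod.natCast_eq_zero_iff] at hl
  simpa [hl] using h

/-- On modules with top `S (k₂ + 1)` and length a multiple of `N`, the syzygy complements the
length to that of the projective cover. -/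
lemma Typ.syzygy_kN (h : Typ pres X (pres.kEven 0 + 1) s) (hd : pres.N ∣ s)
    (hs : s < pres.c (pres.kEven 0 + 1)) (hY : IsSyzygy Λ Y X) :
    Typ pres Y (pres.kEven 0 + 1) (pres.c (pres.kEven 0 + 1) - s) :=
  (h.syzygy' hr hs hY).of_dvd (Nat.dvd_sub (dvd_c hr) hd)

/-- Second syzygies are zero or have top `S (k₂ + 1)` and length a multiple of `N`. -/
lemma Typ.syzygy_two (h : Typ pres X i l) (hY : IsSyzygy Λ Y X) (hZ : IsSyzygy Λ Z Y) :
    Subsingleton Z ∨ ∃ s, pres.N ∣ s ∧ Typ pres Z (pres.kEven 0 + 1) s := by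
  rcases h.le.eq_or_lt with hl | hl
  · have := hY.subsingleton (h.projective_iff.2 hl)
    exact Or.inl (hZ.subsingleton (projective_of_subsingleton Y))
  · have h1 := h.syzygy' hr hl hY
    rcases h1.le.eq_or_lt with h2 | h2
    · exact Or.inl (hZ.subsingleton (h1.projective_iff.2 h2))
    · have h3 := dvd_c_sub hr h1.le
      exact Or.inr ⟨_, h3, (h1.syzygy' hr h2 hZ).of_dvd h3⟩

lemma Typ.syzygy_ge_two (h : Typ pres X i l) (t : ℕ) : ∀ {Y : ModuleCat.{0} Λ},
    IsNthSyzygy Λ (t + 2) Y X →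
    Subsingleton Y ∨ ∃ s, pres.N ∣ s ∧ Typ pres Y (pres.kEven 0 + 1) s := by
  induction t with
  | zero =>
    intro Y hY
    obtain ⟨Z, hZ, hY⟩ := isNthSyzygy_succ.1 hY
    exact h.syzygy_two hr (isNthSyzygy_one.1 hZ) hY
  | succ t ih =>
    intro Y hY
    obtain ⟨Z, hZ, hY⟩ := isNthSyzygy_succ.1 hY
    rcases ih hZ with h0 | ⟨s, hs, h1⟩
    · exact Or.inl (hY.subsingleton (projective_of_subsingleton Z))
    · rcases h1.le.eq_or_lt with h2 | h2
      · exact Or.inl (hY.subsingleton (h1.projective_iff.2 h2))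
      · exact Or.inr ⟨_, Nat.dvd_sub (dvd_c hr) hs, h1.syzygy_kN hr hs h2 hY⟩

/-! ### Projective `D`: global dimension two -/

lemma globalDimLE_two (hT : pres.c (pres.kEven 0 + 1) = pres.N) : GlobalDimLE Λ 2 := by
  refine globalDimLE_of_indec fun M hM hi => ?_
  obtain ⟨i, l, h⟩ := exists_typ pres hM hi
  obtain ⟨Y, hYf, hY⟩ := h.exists_syzygy
  by_cases hp : Module.Projective Λ Y
  · exact PdimLE.succ ⟨Y, isNthSyzygy_one.2 hY, hp⟩
  · have hl : l < pres.c i := by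
      refine h.le.lt_of_ne fun hl => hp ?_
      have := hY.subsingleton (h.projective_iff.2 hl)
      exact projective_of_subsingleton Y
    obtain ⟨Z, -, hZ⟩ := (h.syzygy hl hY).exists_syzygy
    refine ⟨Z, isNthSyzygy_succ.2 ⟨Y, isNthSyzygy_one.2 hY, hZ⟩, ?_⟩
    rcases h.syzygy_two hr hY hZ with h0 | ⟨s, hs, h1⟩
    · exact projective_of_subsingleton Z
    · have h2 := Nat.le_of_dvd h1.one_le hs
      have h3 := h1.le
      exact h1.projective_iff.2 (by omega)

omit hr in
variable (pres) in
include pres in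
/-- The simple socle of `P 0` is the syzygy of the quotient of `P 0` by its socle, and no simple
module is projective. -/
lemma not_globalDimLE_one : ¬ GlobalDimLE Λ 1 := by
  intro h
  have hc := pres.two_le_c 0
  obtain ⟨X, hX⟩ := exists_of_le pres 0 (l := pres.c 0 - 1) (by omega) (by omega)
  obtain ⟨Y, hY, hp⟩ := h X hX.fin
  have h1 := hX.syzygy (by omega) (isNthSyzygy_one.1 hY)
  have h2 := h1.projective_iff.1 hp
  have h3 := pres.two_le_c (0 + ((pres.c 0 - 1 : ℕ) : ZMod pres.N))
  omega

/-! ### Non-projective `D` -/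

/-- Lengths strictly between `0` and `c (k₂ + 1)` stay so under the complement
`s ↦ c (k₂ + 1) - s`; thus no syzygy in this family is projective or zero. -/
lemma Typ.nthSyzygy_kN (n : ℕ) : ∀ {X Y : ModuleCat.{0} Λ} {s : ℕ},
    Typ pres X (pres.kEven 0 + 1) s → pres.N ∣ s → s < pres.c (pres.kEven 0 + 1) →
    IsNthSyzygy Λ n Y X → ∃ s', s' < pres.c (pres.kEven 0 + 1) ∧
      Typ pres Y (pres.kEven 0 + 1) s' := by
  induction n with
  | zero =>
    rintro X Y s h - hs ⟨e⟩
    exact ⟨s, hs, h.congr e.symm⟩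
  | succ n ih =>
    rintro X Y s h hd hs ⟨Z, hZ, hY⟩
    have := h.one_le
    exact ih (h.syzygy_kN hr hd hs hZ) (Nat.dvd_sub (dvd_c hr) hd) (by omega) hY

lemma Typ.hasInfinitePdim (h : Typ pres X (pres.kEven 0 + 1) s) (hd : pres.N ∣ s)
    (hs : s < pres.c (pres.kEven 0 + 1)) : HasInfinitePdim Λ X := by
  rintro ⟨n, Y, hY, hp⟩
  obtain ⟨s', h1, h2⟩ := h.nthSyzygy_kN hr n hd hs hY
  exact h1.ne (h2.projective_iff.1 hp)

omit hr in
variable (pres) in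
/-- The lengths of the non-projective indecomposable modules with top `S (k₂ + 1)` and length
divisible by `N` which are `t`-th syzygies of indecomposable summands of `M`. -/
def lengths (M : ModuleCat.{0} Λ) (t : ℕ) : Set ℕ :=
  {s | s < pres.c (pres.kEven 0 + 1) ∧ pres.N ∣ s ∧ ∃ X, Indec Λ X ∧ IsSummand Λ X M ∧
    ∃ Y, IsNthSyzygy Λ t Y X ∧ Typ pres Y (pres.kEven 0 + 1) s}

omit hr in
lemma IsSummand.finite {M : ModuleCat.{0} Λ} [Module.Finite Λ M] (h : IsSummand Λ X M) :
    Module.Finite Λ X := by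
  obtain ⟨N, -, -, ⟨e⟩⟩ := h
  exact Module.Finite.equiv e.symm

/-- The non-projective modules of different lengths among the `t`-th syzygies, `t ≥ 2`, form a basis
of `L ^ t ⟨add M⟩`. -/
lemma syzygyRank_eq {M : ModuleCat.{0} Λ} [Module.Finite Λ M] (t : ℕ) :
    syzygyRank Λ M (t + 2) = Cardinal.lift.{1} (Cardinal.mk (lengths pres M (t + 2))) := by
  have hv : ∀ s : lengths pres M (t + 2), ∃ Y : FGMod Λ, classOf Λ Y ∈ addGens Λ M (t + 2) ∧
      Typ pres Y.1 (pres.kEven 0 + 1) s := by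
    rintro ⟨s, -, -, X, hX, hXM, Y, hY, h⟩
    exact ⟨⟨Y, h.fin⟩, ⟨X, hX, hXM, ⟨Y, h.fin⟩, hY, rfl⟩, h⟩
  choose v hv1 hv2 using hv
  refine rank_closure v (fun i => (hv2 i).uni) (fun i => (hv2 i).indec.1)
    (fun i hp => i.2.1.ne ((hv2 i).projective_iff.1 hp)) ?_ _ hv1 ?_
  · rintro i j ⟨e⟩
    exact Subtype.ext (by rw [← (hv2 i).len, ← (hv2 j).len, ln_equiv e])
  · rintro _ ⟨X, hX, hXM, Y, hY, rfl⟩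
    obtain ⟨i, l, h⟩ := exists_typ pres hXM.finite hX
    rcases h.syzygy_ge_two hr t hY with h0 | ⟨s, hs, h1⟩
    · exact Or.inl (classOf_projective (projective_of_subsingleton _))
    · rcases h1.le.eq_or_lt with h2 | h2
      · exact Or.inl (classOf_projective (h1.projective_iff.2 h2))
      · have hm : s ∈ lengths pres M (t + 2) := ⟨h2, hs, X, hX, hXM, Y.1, hY, h1⟩
        obtain ⟨e⟩ := h1.iso (hv2 ⟨s, hm⟩)
        exact Or.inr ⟨⟨s, hm⟩, classOf_congr e⟩

/-- From the second syzygy on, `Ω` permutes the classes that occur by `s ↦ c (k₂ + 1) - s`. -/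
lemma lengths_succ {M : ModuleCat.{0} Λ} [Module.Finite Λ M] (t : ℕ) :
    lengths pres M (t + 2 + 1) =
      (fun s => pres.c (pres.kEven 0 + 1) - s) '' lengths pres M (t + 2) := by
  ext q
  constructor
  · rintro ⟨hq, hd, X, hX, hXM, Y, hY, h⟩
    obtain ⟨i, l, hl⟩ := exists_typ pres hXM.finite hX
    obtain ⟨Z, hZ, hY⟩ := isNthSyzygy_succ.1 hY
    have hn : ¬ Module.Projective Λ Z := fun hp =>
      not_subsingleton_iff_nontrivial.2 h.indec.1 (hY.subsingleton hp)
    rcases hl.syzygy_ge_two hr t hZ with h0 | ⟨s, hs, h1⟩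
    · exact absurd (projective_of_subsingleton Z) hn
    · have h2 : s < pres.c (pres.kEven 0 + 1) :=
        h1.le.lt_of_ne fun h2 => hn (h1.projective_iff.2 h2)
      refine ⟨s, ⟨h2, hs, X, hX, hXM, Z, hZ, h1⟩, ?_⟩
      rw [← h.len, (h1.syzygy_kN hr hs h2 hY).len]
  · rintro ⟨s, ⟨h2, hs, X, hX, hXM, Z, hZ, h1⟩, rfl⟩
    obtain ⟨Y, -, hY⟩ := h1.exists_syzygy
    have := h1.one_le
    exact ⟨by change _ - _ < _; omega, Nat.dvd_sub (dvd_c hr) hs, X, hX, hXM, Y,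
      isNthSyzygy_succ.2 ⟨Z, hZ, hY⟩, h1.syzygy_kN hr hs h2 hY⟩

lemma syzygyRank_stable {M : ModuleCat.{0} Λ} [Module.Finite Λ M] (j : ℕ) :
    syzygyRank Λ M (2 + j) = syzygyRank Λ M 2 := by
  induction j with
  | zero => rfl
  | succ j ih =>
    rw [← ih, show 2 + (j + 1) = (j + 1) + 2 by ring, syzygyRank_eq hr, add_comm 2 j,
      syzygyRank_eq hr, show j + 1 + 2 = j + 2 + 1 by ring, lengths_succ hr]
    congr 1
    refine Cardinal.mk_image_eq_of_injOn _ _ ?_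
    intro s hs s' hs' h
    have h1 := hs.1
    have h2 := hs'.1
    change _ - s = _ - s' at h
    omega

lemma phi_le_two (M : FGMod Λ) : phi Λ M.1 ≤ 2 := by
  have := M.2
  exact Nat.sInf_le fun j _ => syzygyRank_stable hr j

omit hr [IsArtinianRing Λ] in
lemma isSummand_prod_left (A B : ModuleCat.{0} Λ) : IsSummand Λ A (ModuleCat.of Λ (A × B)) :=
  ⟨_, _, LinearMap.isCompl_range_inl_inr, ⟨LinearEquiv.ofInjective _ LinearMap.inl_injective⟩⟩

omit hr [IsArtinianRing Λ] in
lemma isSummand_prod_right (A B : ModuleCat.{0} Λ) : IsSummand Λ B (ModuleCat.of Λ (A × B)) :=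
  ⟨_, _, LinearMap.isCompl_range_inl_inr.symm,
    ⟨LinearEquiv.ofInjective _ LinearMap.inr_injective⟩⟩

omit hr [IsArtinianRing Λ] in
lemma rank_closure_le_one {s : Set (K0 Λ)} (h : s.Subsingleton) :
    Module.rank ℤ (AddSubgroup.closure s) ≤ 1 := by
  have hs : AddSubgroup.closure s = (Submodule.span ℤ s).toAddSubgroup := by
    rw [Submodule.span_int_eq_addSubgroupClosure]
  rw [hs]
  exact (rank_span_le s).trans (Cardinal.mk_le_one_iff_set_subsingleton.2 h)

/-- If two modules have non-projective syzygies of different lengths but isomorphic second syzygies,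
the rank drops between the first and second steps for their direct sum. -/
lemma two_le_phi {X₁ X₂ Y₁ Y₂ Z₁ Z₂ : ModuleCat.{0} Λ} {i₁ i₂ j₁ j₂ k : ZMod pres.N}
    {l₁ l₂ q₁ q₂ q : ℕ} (hX₁ : Typ pres X₁ i₁ l₁) (hX₂ : Typ pres X₂ i₂ l₂)
    (hY₁ : Typ pres Y₁ j₁ q₁) (hY₂ : Typ pres Y₂ j₂ q₂) (hq : q₁ ≠ q₂)
    (hp₁ : q₁ < pres.c j₁) (hp₂ : q₂ < pres.c j₂)
    (hZ₁ : Typ pres Z₁ k q) (hZ₂ : Typ pres Z₂ k q)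
    (hs₁ : IsSyzygy Λ Y₁ X₁) (hs₂ : IsSyzygy Λ Y₂ X₂)
    (ht₁ : IsSyzygy Λ Z₁ Y₁) (ht₂ : IsSyzygy Λ Z₂ Y₂) :
    2 ≤ phi Λ (ModuleCat.of Λ (X₁ × X₂)) := by
  have := hX₁.fin
  have := hX₂.fin
  set M := ModuleCat.of Λ (X₁ × X₂) with hM
  have hf : Module.Finite Λ M := inferInstanceAs (Module.Finite Λ (X₁ × X₂))
  have hsum : ∀ X, Indec Λ X → IsSummand Λ X M → Nonempty (X ≃ₗ[Λ] X₁) ∨ Nonempty (X ≃ₗ[Λ] X₂) := by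
    intro X hX h
    have := h.finite
    exact h.iso_of_prod hX (pres.nakayama X this hX) hX₁.indec hX₂.indec (LinearEquiv.refl _ _)
  have h1 : syzygyRank Λ M 1 = 2 := by
    let v : Bool → FGMod Λ := fun b => cond b ⟨Y₁, hY₁.fin⟩ ⟨Y₂, hY₂.fin⟩
    have := rank_closure v (by rintro (_ | _); exacts [hY₂.uni, hY₁.uni])
      (by rintro (_ | _); exacts [hY₂.indec.1, hY₁.indec.1])
      (by
        rintro (_ | _) h
        · exact hp₂.ne (hY₂.projective_iff.1 h)
        · exact hp₁.ne (hY₁.projective_iff.1 h))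
      (by
        rintro (_ | _) (_ | _) ⟨e⟩
        · rfl
        · exact absurd (by rw [← hY₁.len, ← hY₂.len]; exact (ln_equiv e).symm) hq
        · exact absurd (by rw [← hY₁.len, ← hY₂.len]; exact ln_equiv e) hq
        · rfl)
      (addGens Λ M 1)
      (by
        rintro (_ | _)
        · exact ⟨X₂, hX₂.indec, isSummand_prod_right _ _, _, isNthSyzygy_one.2 hs₂, rfl⟩
        · exact ⟨X₁, hX₁.indec, isSummand_prod_left _ _, _, isNthSyzygy_one.2 hs₁, rfl⟩)
      (by
        rintro _ ⟨X, hX, hXM, Y, hY, rfl⟩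
        right
        rcases hsum X hX hXM with ⟨⟨e⟩⟩ | ⟨⟨e⟩⟩
        · obtain ⟨e'⟩ := (hY.congr (LinearEquiv.refl _ _) e).unique (isNthSyzygy_one.2 hs₁)
          exact ⟨true, classOf_congr e'⟩
        · obtain ⟨e'⟩ := (hY.congr (LinearEquiv.refl _ _) e).unique (isNthSyzygy_one.2 hs₂)
          exact ⟨false, classOf_congr e'⟩)
    simpa [syzygyRank] using this
  have h2 : syzygyRank Λ M 2 ≤ 1 := by
    refine rank_closure_le_one ?_
    have H : ∀ x ∈ addGens Λ M 2, x = classOf Λ ⟨Z₁, hZ₁.fin⟩ := by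
      rintro _ ⟨X, hX, hXM, Y, hY, rfl⟩
      refine classOf_congr (Nonempty.some ?_)
      rcases hsum X hX hXM with ⟨⟨e⟩⟩ | ⟨⟨e⟩⟩
      · exact (hY.congr (LinearEquiv.refl _ _) e).unique ⟨Y₁, hs₁, isNthSyzygy_one.2 ht₁⟩
      · obtain ⟨e₁⟩ :=
          (hY.congr (LinearEquiv.refl _ _) e).unique ⟨Y₂, hs₂, isNthSyzygy_one.2 ht₂⟩
        obtain ⟨e₂⟩ := hZ₂.iso hZ₁
        exact ⟨e₁.trans e₂⟩
    intro x hx y hy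
    rw [H x hx, H y hy]
  have hne : syzygyRank Λ M 2 ≠ syzygyRank Λ M 1 := by
    rw [h1]
    exact (h2.trans_lt Cardinal.one_lt_two).ne
  refine le_csInf ⟨2, fun j _ => syzygyRank_stable hr j⟩ fun t ht => ?_
  by_contra hlt
  interval_cases t
  · exact hne ((ht 2 (by omega)).trans (ht 1 le_rfl).symm)
  · exact hne (ht 1 le_rfl)

lemma phiDim_eq_two (hT : pres.c (pres.kEven 0 + 1) ≠ pres.N) : phiDim Λ = 2 := by
  apply le_antisymm
  · exact iSup_le fun M => by exact_mod_cast phi_le_two hr M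
  have hN := pres.three_le_N
  -- The hypothesis gives `2 N ≤ c (k₂ + 1) < c k₁ + N`, so that `N < c k₁`.
  have hm : 3 < pres.c (pres.kOdd 0) := by
    obtain ⟨k, hk⟩ := dvd_c hr
    have h1 := pres.two_le_c (pres.kEven 0 + 1)
    have h2 := c_lt hr (pres.kEven 0 + 1)
    rw [hk] at hT h1 h2
    rcases k with _ | _ | k
    · omega
    · simp at hT
    · nlinarith
  -- One of the vertices `k₂ - 1` and `k₂ - 2` is not the start of the relation; there the modules
  -- of lengths `q` and `q + 1` that end at `k₂` have the same syzygy.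
  obtain ⟨q, hq1, hq2, hq⟩ : ∃ q : ℕ, 1 ≤ q ∧ q ≤ 2 ∧ pres.kEven 0 - q ≠ pres.kOdd 0 := by
    by_cases h : pres.kEven 0 - (1 : ℕ) = pres.kOdd 0
    · refine ⟨2, by omega, le_rfl, fun h' => ?_⟩
      rw [← h] at h'
      have h0 : ((1 : ℕ) : ZMod pres.N) = 0 := by
        push_cast at h' ⊢
        linear_combination -h'
      rw [ZMod.natCast_eq_zero_iff, Nat.dvd_one] at h0
      omega
    · exact ⟨1, le_rfl, by omega, h⟩
  have hc := c_of_ne hr hq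
  rw [show pres.kEven 0 - (q : ZMod pres.N) + 1 = pres.kEven 0 + 1 - q by ring] at hc
  have hcq := le_c hr (pres.kEven 0 + 1 - q)
  have heq : pres.kEven 0 - (q : ZMod pres.N) = pres.kEven 0 + 1 - (q + 1 : ℕ) := by
    push_cast
    ring
  rw [heq] at hc
  obtain ⟨X₁, hX₁⟩ := exists_of_le pres (pres.kOdd 0) (l := pres.c (pres.kOdd 0) - q)
    (by omega) (by omega)
  obtain ⟨X₂, hX₂⟩ := exists_of_le pres (pres.kOdd 0) (l := pres.c (pres.kOdd 0) - (q + 1))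
    (by omega) (by omega)
  obtain ⟨Y₁, -, hs₁⟩ := hX₁.exists_syzygy
  obtain ⟨Y₂, -, hs₂⟩ := hX₂.exists_syzygy
  have hY₁ := hX₁.syzygy' hr (by omega) hs₁
  have hY₂ := hX₂.syzygy' hr (by omega) hs₂
  rw [Nat.sub_sub_self (by omega)] at hY₁ hY₂
  obtain ⟨Z₁, -, ht₁⟩ := hY₁.exists_syzygy
  obtain ⟨Z₂, -, ht₂⟩ := hY₂.exists_syzygy
  have hZ₁ := hY₁.syzygy' hr (by omega) ht₁
  have hZ₂ := hY₂.syzygy' hr (by omega) ht₂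
  rw [hc, Nat.add_sub_add_right] at hZ₂
  have := hX₁.fin
  have := hX₂.fin
  have h2 := two_le_phi hr hX₁ hX₂ hY₁ hY₂ (by omega) (by omega) (by omega) hZ₁ hZ₂
    hs₁ hs₂ ht₁ ht₂
  have h3 : ((phi Λ (ModuleCat.of Λ (X₁ × X₂)) : ℕ) : ℕ∞) ≤ phiDim Λ :=
    le_iSup (fun M : FGMod Λ => (phi Λ M.1 : ℕ∞))
      ⟨ModuleCat.of Λ (X₁ × X₂), inferInstanceAs (Module.Finite Λ (X₁ × X₂))⟩
  exact le_trans (by exact_mod_cast h2) h3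

end OneRelation

end PhiDim

namespace PhiDim

/-- For a cyclic non-self-injective Nakayama algebra on `N` vertices defined by a single
monomial relation `α_{k₂} ⋯ α_{k₁} = 0`, with `D` the indecomposable uniserial module of
length `N` with top `S_{k₂+1}` and socle `S_{k₂}`: if `D` is projective then
`gldim Λ = 2`; otherwise `D` has infinite projective dimension and `φdim Λ = 2`. -/
theorem one_relation_phiDim {R Λ : Type} [CommRing R] [Ring Λ] [Algebra R Λ]
    (pres : CyclicNakayama R Λ) (hr : pres.r = 1)
    (hnsi : ¬ ∀ M : ModuleCat.{0} Λ, Module.Projective Λ M → Module.Injective Λ M)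
    (D : ModuleCat.{0} Λ) (hDfin : Module.Finite Λ D) (hDind : Indec Λ D)
    (hDuni : IsUniserial Λ D) (hDlen : HasLength Λ D pres.N)
    (hDtop : TopIso Λ D (pres.S (pres.kEven 0 + 1)))
    (hDsoc : SocIso Λ D (pres.S (pres.kEven 0))) :
    (Module.Projective Λ D → GlobalDimLE Λ 2 ∧ ¬ GlobalDimLE Λ 1) ∧
    (¬ Module.Projective Λ D → HasInfinitePdim Λ D ∧ phiDim Λ = 2) := by
  have := pres.isArtinianRing
  have hD : Typ pres D (pres.kEven 0 + 1) pres.N := ⟨hDfin, hDind, hDtop, ln_of_hasLength hDlen⟩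
  constructor
  · intro hp
    exact ⟨globalDimLE_two hr (hD.projective_iff.1 hp).symm, not_globalDimLE_one pres⟩
  · intro hp
    rw [hD.projective_iff] at hp
    exact ⟨hD.hasInfinitePdim hr dvd_rfl (hD.le.lt_of_ne hp), phiDim_eq_two hr (Ne.symm hp)⟩

end PhiDim
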